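/- The number α₉ = √19 · ln((√19 − 1)/(√19 + 1)) has irrationality measure at most 5.23163; that is, for every real κ > 5.23163, there exist only finitely many pairs (p, q) with p ∈ ℤ and q a positive integer such that |α₉ − p/q| < q^(−κ). -/

import Mathlib

/-!
For `N = 2k + 1` put `I(a, b, c) = ∫ t in -1..1, t²ᵃ (1 - t²)ᵇ / (N - t²)ᶜ`. Then `I(0, 0, 1)` is
the logarithm up to a factor, and partial fractions make `I(a, b, a + 1)` a linear form in `1` and
`I(0, 0, 1)`. For `a ≤ b ≤ 2a` its coefficients become integers after multiplication by a power
of `2` and the least common multiple of the integers up to `2b`. A symmetry exchanging `a` and `b`,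
up to the ratio of the central binomial coefficients, shows that the primes dividing `C(2a, a)` but
not `C(2b, b)` can be cancelled from both coefficients.

For `a = 5n`, `b = 6n`, `N = 19` the growth of the cancelled linear forms in `n` is known exactly:
Laplace's method gives that of the integrals, and the prime number theorem those of the least common
multiple and of the product of the cancelled primes. A sequence of small linear forms whose decay
rate is exactly known bounds the irrationality measure. The prime number theorem comes from the
Wiener–Ikehara theorem and the non-vanishing of the zeta function on the line of real part one.
-/

open Filter MeasureTheory Real Set Topology

section WienerIkehara

/-- The Fejér kernel `(sin (v / 2) / (v / 2))²`: a nonnegative integrable function whose Fourier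
transform has compact support, used to smooth in the proof of the Wiener–Ikehara theorem. -/
noncomputable def fejerKernel (v : ℝ) : ℝ := sinc (v / 2) ^ 2

lemma fejerKernel_nonneg (v : ℝ) : 0 ≤ fejerKernel v := sq_nonneg _

lemma continuous_fejerKernel : Continuous fejerKernel :=
  (continuous_sinc.comp (continuous_id.div_const 2)).pow 2

@[fun_prop]
lemma measurable_fejerKernel : Measurable fejerKernel := continuous_fejerKernel.measurable

lemma fejerKernel_of_ne_zero {v : ℝ} (hv : v ≠ 0) : fejerKernel v = (2 - 2 * cos v) / v ^ 2 := by
  rw [fejerKernel, sinc_of_ne_zero (by simpa using hv), div_pow, sin_sq_eq_half_sub,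
    mul_div_cancel₀ v two_ne_zero]
  field_simp

lemma fejerKernel_le (v : ℝ) : fejerKernel v ≤ 8 * (1 + v ^ 2)⁻¹ := by
  have hle : fejerKernel v ≤ 1 := sq_le_one_iff_abs_le_one _ |>.2 (abs_sinc_le_one _)
  have hsq : fejerKernel v * v ^ 2 ≤ 4 := by
    rcases eq_or_ne v 0 with rfl | hv
    · simp
    · rw [fejerKernel_of_ne_zero hv, div_mul_cancel₀ _ (by positivity)]
      linarith [neg_one_le_cos v]
  rw [← div_eq_mul_inv, le_div_iff₀ (by positivity)]
  linarith

lemma integrable_fejerKernel : Integrable fejerKernel := by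
  refine (integrable_inv_one_add_sq.const_mul 8).mono'
    measurable_fejerKernel.aestronglyMeasurable (.of_forall fun v => ?_)
  rw [norm_of_nonneg (fejerKernel_nonneg v)]
  exact fejerKernel_le v

lemma integrable_fejerKernel_comp {lam : ℝ} (hlam : lam ≠ 0) (y : ℝ) :
    Integrable fun u => fejerKernel (lam * (y - u)) :=
  (integrable_fejerKernel.comp_mul_left' hlam).comp_sub_left y

lemma integral_fejerKernel_pos : 0 < ∫ v, fejerKernel v := by
  rw [integral_pos_iff_support_of_nonneg fejerKernel_nonneg integrable_fejerKernel]
  exact continuous_fejerKernel.isOpen_support.measure_pos volume ⟨0, by simp [fejerKernel]⟩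

lemma integral_one_sub_mul_cos (v : ℝ) :
    ∫ t in (0 : ℝ)..1, 2 * (1 - t) * cos (t * v) = fejerKernel v := by
  rcases eq_or_ne v 0 with rfl | hv
  · simp only [mul_zero, cos_zero, mul_one, intervalIntegral.integral_const_mul]
    rw [intervalIntegral.integral_sub (by simp) (by simp)]
    norm_num [fejerKernel]
  have hderiv (t : ℝ) : HasDerivAt
      (fun t => 2 * (1 - t) * sin (t * v) / v - 2 * cos (t * v) / v ^ 2)
      (2 * (1 - t) * cos (t * v)) t := by
    have hlin := (hasDerivAt_id t).mul_const v
    have h := (((((hasDerivAt_id t).const_sub 1).const_mul 2).mul hlin.sin).div_const v).sub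
      ((hlin.cos.const_mul 2).div_const (v ^ 2))
    convert! h using 1
    simp only [id]
    field_simp
    ring
  rw [intervalIntegral.integral_eq_sub_of_hasDerivAt (fun t _ => hderiv t)
    (Continuous.intervalIntegrable (by fun_prop) _ _), fejerKernel_of_ne_zero hv]
  simp
  ring

/-- The triangle function `1 - |t|` modulated by the frequency `y`; integrated over `[-1, 1]` it
gives the Fejér kernel at `y`. -/
noncomputable def modulatedTriangle (y t : ℝ) : ℂ := (1 - |t| : ℝ) * Complex.exp (t * y * Complex.I)

lemma continuous_modulatedTriangle : Continuous fun p : ℝ × ℝ => modulatedTriangle p.1 p.2 := by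
  unfold modulatedTriangle
  fun_prop

lemma norm_modulatedTriangle_le {t : ℝ} (ht : t ∈ Ioc (-1 : ℝ) 1) (y : ℝ) :
    ‖modulatedTriangle y t‖ ≤ 1 := by
  have habs : |t| ≤ 1 := abs_le.2 ⟨ht.1.le, ht.2⟩
  rw [modulatedTriangle, norm_mul, Complex.norm_real, ← Complex.ofReal_mul,
    Complex.norm_exp_ofReal_mul_I, mul_one, norm_of_nonneg (by linarith)]
  linarith [abs_nonneg t]

lemma integral_modulatedTriangle (y : ℝ) :
    ∫ t in Ioc (-1 : ℝ) 1, modulatedTriangle y t = fejerKernel y := by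
  have hcont : Continuous (modulatedTriangle y) :=
    continuous_modulatedTriangle.comp (Continuous.prodMk_right y)
  have hint (a b : ℝ) : IntervalIntegrable (modulatedTriangle y) volume a b :=
    hcont.intervalIntegrable a b
  have hneg : ∫ t in (-1 : ℝ)..0, modulatedTriangle y t
      = ∫ t in (0 : ℝ)..1, modulatedTriangle y (-t) := by
    simp [intervalIntegral.integral_comp_neg]
  have hint_neg : IntervalIntegrable (fun t => modulatedTriangle y (-t)) volume 0 1 :=
    (hcont.comp continuous_neg).intervalIntegrable 0 1
  rw [← intervalIntegral.integral_of_le (by norm_num),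
    ← intervalIntegral.integral_add_adjacent_intervals (hint (-1) 0) (hint 0 1), hneg,
    ← intervalIntegral.integral_add hint_neg (hint 0 1),
    ← integral_one_sub_mul_cos, ← intervalIntegral.integral_ofReal]
  refine intervalIntegral.integral_congr fun t ht => ?_
  rw [uIcc_of_le zero_le_one] at ht
  have hcos := Complex.two_cos (t * y)
  simp only [modulatedTriangle, abs_neg, abs_of_nonneg ht.1]
  push_cast
  rw [show -(t : ℂ) * y * Complex.I = -(t * y) * Complex.I by ring]
  linear_combination (-(1 - (t : ℂ))) * hcos

variable {h : ℝ → ℝ} {C : ℝ}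

lemma integral_modulatedTriangle_mul_laplace (hmeas : Measurable h) (hC : ∀ u, |h u| ≤ C)
    {ε : ℝ} (hε : 0 < ε) (lam y : ℝ) :
    ∫ t in Ioc (-1 : ℝ) 1, modulatedTriangle (lam * y) t *
        ∫ u in Ioi (0 : ℝ), (h u : ℂ) * Complex.exp (-(ε + lam * t * Complex.I) * u)
      = (∫ u in Ioi (0 : ℝ), h u * exp (-ε * u) * fejerKernel (lam * (y - u)) : ℝ) := by
  simp only [← integral_const_mul]
  rw [integral_integral_swap, ← integral_complex_ofReal]
  · refine integral_congr_ae (.of_forall fun u => ?_)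
    push_cast
    rw [← integral_modulatedTriangle, ← integral_const_mul]
    refine integral_congr_ae (.of_forall fun t => ?_)
    have hexp : Complex.exp (t * (lam * y) * Complex.I) *
        Complex.exp (-(ε + lam * t * Complex.I) * u)
        = Complex.exp (-ε * u) * Complex.exp (t * (lam * (y - u)) * Complex.I) := by
      rw [← Complex.exp_add, ← Complex.exp_add]
      ring_nf
    simp only [modulatedTriangle]
    push_cast
    linear_combination (1 - ((|t| : ℝ) : ℂ)) * (h u : ℂ) * hexp
  · have hdom : Integrable (fun p : ℝ × ℝ => (1 : ℝ) * (C * exp (-ε * p.2)))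
        ((volume.restrict (Ioc (-1 : ℝ) 1)).prod (volume.restrict (Ioi (0 : ℝ)))) :=
      Integrable.mul_prod (f := fun _ => (1 : ℝ)) (integrable_const _)
        ((integrableOn_exp_mul_Ioi (by linarith) 0).const_mul C)
    refine hdom.mono' (Measurable.aestronglyMeasurable ?_) ?_
    · have := continuous_modulatedTriangle.measurable
      unfold Function.uncurry
      fun_prop
    · rw [Measure.prod_restrict]
      filter_upwards [ae_restrict_mem (measurableSet_Ioc.prod measurableSet_Ioi)] with p hp
      have hre : (-((ε : ℂ) + lam * p.1 * Complex.I) * p.2).re = -ε * p.2 := by simp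
      rw [Function.uncurry_def, norm_mul, norm_mul, Complex.norm_real, Complex.norm_exp, hre]
      gcongr
      exacts [norm_modulatedTriangle_le hp.1 _, hC _]

lemma tendsto_integral_exp_mul_fejerKernel (hmeas : Measurable h) (hC : ∀ u, |h u| ≤ C)
    {lam : ℝ} (hlam : lam ≠ 0) (y : ℝ) :
    Tendsto (fun ε : ℝ => ∫ u in Ioi (0 : ℝ), h u * exp (-ε * u) * fejerKernel (lam * (y - u)))
      (𝓝[>] 0) (𝓝 (∫ u in Ioi (0 : ℝ), h u * fejerKernel (lam * (y - u)))) := by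
  refine tendsto_integral_filter_of_dominated_convergence
    (fun u => C * fejerKernel (lam * (y - u))) ?_ ?_
    ((integrable_fejerKernel_comp hlam y).const_mul C).integrableOn ?_
  · exact .of_forall fun ε => Measurable.aestronglyMeasurable (by fun_prop)
  · filter_upwards [self_mem_nhdsWithin] with ε (hε : 0 < ε)
    filter_upwards [ae_restrict_mem measurableSet_Ioi] with u (hu : 0 < u)
    have hexp : exp (-ε * u) ≤ 1 := exp_le_one_iff.2 (by nlinarith)
    rw [norm_mul, norm_mul, norm_of_nonneg (fejerKernel_nonneg _), norm_of_nonneg (exp_pos _).le]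
    have hK := fejerKernel_nonneg (lam * (y - u))
    gcongr
    exact (mul_le_of_le_one_right (norm_nonneg _) hexp).trans (hC u)
  · refine .of_forall fun u => ?_
    have hcont : Continuous fun ε : ℝ => h u * exp (-ε * u) * fejerKernel (lam * (y - u)) := by
      fun_prop
    simpa using (hcont.tendsto 0).mono_left nhdsWithin_le_nhds

lemma tendsto_integral_modulatedTriangle_mul {G : ℂ → ℂ}
    (hG : ContinuousOn G {s | 0 ≤ s.re}) (lam y : ℝ) :
    Tendsto (fun ε : ℝ => ∫ t in Ioc (-1 : ℝ) 1,
        modulatedTriangle y t * G (ε + lam * t * Complex.I)) (𝓝[>] 0)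
      (𝓝 (∫ t in Ioc (-1 : ℝ) 1, modulatedTriangle y t * G (lam * t * Complex.I))) := by
  have hcont : ContinuousOn (fun p : ℝ × ℝ => G (p.1 + lam * p.2 * Complex.I)) {p | 0 ≤ p.1} :=
    hG.comp (by fun_prop) fun p hp => by simpa using hp
  obtain ⟨B, hB⟩ := ((isCompact_Icc (a := (0 : ℝ)) (b := 1)).prod
    (isCompact_Icc (a := (-1 : ℝ)) (b := 1))).exists_bound_of_continuousOn
      (hcont.mono fun p hp => hp.1.1)
  have hIoc : ∀ᶠ ε : ℝ in 𝓝[>] 0, ε ∈ Ioc (0 : ℝ) 1 := Ioc_mem_nhdsGT one_pos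
  refine tendsto_integral_filter_of_dominated_convergence (fun _ => B) ?_ ?_
    (integrable_const _) (.of_forall fun t => Tendsto.const_mul _ ?_)
  · filter_upwards [hIoc] with ε hε
    refine ContinuousOn.aestronglyMeasurable (.mul ?_ ?_) measurableSet_Ioc
    · exact (continuous_modulatedTriangle.comp (Continuous.prodMk_right y)).continuousOn
    · exact hcont.comp (f := fun t : ℝ => (ε, t)) (by fun_prop) fun t _ => hε.1.le
  · filter_upwards [hIoc] with ε hε
    filter_upwards [ae_restrict_mem measurableSet_Ioc] with t ht
    rw [norm_mul]
    exact (mul_le_of_le_one_left (norm_nonneg _) (norm_modulatedTriangle_le ht y)).trans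
      (hB (ε, t) ⟨⟨hε.1.le, hε.2⟩, ht.1.le, ht.2⟩)
  · have hpath : Tendsto (fun ε : ℝ => ((ε, t) : ℝ × ℝ)) (𝓝[>] 0) (𝓝[{p | 0 ≤ p.1}] (0, t)) := by
      refine tendsto_nhdsWithin_iff.2 ⟨?_, hIoc.mono fun ε hε => hε.1.le⟩
      exact ((Continuous.prodMk_left t).tendsto 0).mono_left nhdsWithin_le_nhds
    simpa [Function.comp_def] using (hcont (0, t) (by simp)).tendsto.comp hpath

lemma tendsto_integral_modulatedTriangle_mul_atTop (g : ℝ → ℂ) {lam : ℝ} (hlam : 0 < lam) :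
    Tendsto (fun y : ℝ => ∫ t in Ioc (-1 : ℝ) 1, modulatedTriangle (lam * y) t * g t)
      atTop (𝓝 0) := by
  have hfreq : Tendsto (fun y : ℝ => -(lam / (2 * π)) * y) atTop (cocompact ℝ) :=
    (tendsto_id.const_mul_atTop_of_neg (by simp only [neg_lt_zero]; positivity)).mono_right
      atBot_le_cocompact
  have hRL := (Real.tendsto_integral_exp_smul_cocompact
    ((Ioc (-1 : ℝ) 1).indicator fun t => ((1 - |t| : ℝ) : ℂ) * g t)).comp hfreq
  refine hRL.congr fun y => ?_
  rw [Function.comp_apply, ← integral_indicator measurableSet_Ioc]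
  refine integral_congr_ae (.of_forall fun t => ?_)
  by_cases ht : t ∈ Ioc (-1 : ℝ) 1
  · have hphase : 2 * π * -(t * (-(lam / (2 * π)) * y)) = t * (lam * y) := by
      field_simp
    simp only [indicator_of_mem ht, Circle.smul_def, Real.fourierChar_apply, smul_eq_mul, hphase,
      modulatedTriangle]
    push_cast
    ring
  · simp [indicator_of_notMem ht]

variable {G : ℂ → ℂ}

theorem tendsto_integral_mul_fejerKernel (hmeas : Measurable h) (hC : ∀ u, |h u| ≤ C)
    (hGc : ContinuousOn G {s | 0 ≤ s.re})
    (hG : ∀ s : ℂ, 0 < s.re → G s = ∫ u in Ioi (0 : ℝ), (h u : ℂ) * Complex.exp (-s * u))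
    {lam : ℝ} (hlam : 0 < lam) :
    Tendsto (fun y => ∫ u in Ioi (0 : ℝ), h u * fejerKernel (lam * (y - u))) atTop (𝓝 0) := by
  have hboundary (y : ℝ) :
      ∫ t in Ioc (-1 : ℝ) 1, modulatedTriangle (lam * y) t * G (lam * t * Complex.I)
        = (∫ u in Ioi (0 : ℝ), h u * fejerKernel (lam * (y - u)) : ℝ) := by
    refine tendsto_nhds_unique_of_eventuallyEq
      (tendsto_integral_modulatedTriangle_mul hGc lam (lam * y))
      ((Complex.continuous_ofReal.tendsto _).comp
        (tendsto_integral_exp_mul_fejerKernel hmeas hC hlam.ne' y)) ?_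
    filter_upwards [self_mem_nhdsWithin] with ε (hε : 0 < ε)
    rw [Function.comp_apply, ← integral_modulatedTriangle_mul_laplace hmeas hC hε]
    refine integral_congr_ae (.of_forall fun t => ?_)
    simp only [hG (ε + lam * t * Complex.I) (by simpa using hε)]
  have hlim := tendsto_integral_modulatedTriangle_mul_atTop
    (fun t => G (lam * t * Complex.I)) hlam
  simp only [hboundary] at hlim
  simpa [Function.comp_def] using (Complex.continuous_re.tendsto _).comp hlim

lemma exists_integral_fejerKernel_mul_step_pos {η δ : ℝ} (hη : 0 < η) (hδ : 0 < δ) (hC : 0 ≤ C) :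
    ∃ lam : ℝ, 0 < lam ∧ 0 < ∫ v, fejerKernel (lam * v) * (if |v| ≤ η then δ else -C) := by
  have hlim : Tendsto (fun lam : ℝ => ∫ v, fejerKernel v * (if |v| ≤ lam * η then δ else -C))
      atTop (𝓝 (∫ v, fejerKernel v * δ)) := by
    refine tendsto_integral_filter_of_dominated_convergence (fun v => fejerKernel v * (δ + C))
      (.of_forall fun lam => ?_) (.of_forall fun lam => .of_forall fun v => ?_)
      (integrable_fejerKernel.mul_const _) (.of_forall fun v => tendsto_const_nhds.congr' ?_)
    · exact (measurable_fejerKernel.mul (.ite (measurableSet_le (by fun_prop) (by fun_prop))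
        measurable_const measurable_const)).aestronglyMeasurable
    · rw [norm_mul, norm_of_nonneg (fejerKernel_nonneg _)]
      refine mul_le_mul_of_nonneg_left ?_ (fejerKernel_nonneg v)
      split_ifs <;> rw [norm_eq_abs, abs_le] <;> constructor <;> linarith
    · filter_upwards [(tendsto_id.atTop_mul_const hη).eventually_ge_atTop |v|] with lam hl
      rw [if_pos (by simpa using hl)]
  have hpos : 0 < ∫ v, fejerKernel v * δ := by
    rw [integral_mul_const]
    exact mul_pos integral_fejerKernel_pos hδ
  obtain ⟨lam, hint, hlam⟩ :=
    ((hlim.eventually (lt_mem_nhds hpos)).and (eventually_gt_atTop 0)).exists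
  refine ⟨lam, hlam, ?_⟩
  have hscale := Measure.integral_comp_mul_left
    (fun w => fejerKernel w * (if |w| ≤ lam * η then δ else -C)) lam
  simp only [abs_mul, abs_of_pos hlam, mul_le_mul_iff_right₀ hlam] at hscale
  rw [hscale]
  exact mul_pos (by positivity) hint

-- A function that stays above `δ` on a window around `y` makes the smoothed integral at `y` larger
-- than a positive constant, once the kernel is concentrated enough on the window.
lemma eventually_exists_lt_of_tendsto_integral_fejerKernel (hmeas : Measurable h)
    (hC : ∀ u, |h u| ≤ C)
    (hlim : ∀ lam : ℝ, 0 < lam →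
      Tendsto (fun y => ∫ u in Ioi (0 : ℝ), h u * fejerKernel (lam * (y - u))) atTop (𝓝 0))
    {η δ : ℝ} (hη : 0 < η) (hδ : 0 < δ) :
    ∀ᶠ y in atTop, ∃ u, |y - u| ≤ η ∧ h u < δ := by
  have hC0 : 0 ≤ C := (abs_nonneg _).trans (hC 0)
  obtain ⟨lam, hlam, hpos⟩ := exists_integral_fejerKernel_mul_step_pos hη hδ hC0
  filter_upwards [(hlim lam hlam).eventually (gt_mem_nhds hpos), eventually_gt_atTop η]
    with y hy hηy
  by_contra! hge
  refine hy.not_ge ?_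
  have hK := integrable_fejerKernel_comp hlam.ne' y
  rw [← integral_indicator measurableSet_Ioi, ← integral_sub_left_eq_self
    (fun v => fejerKernel (lam * v) * (if |v| ≤ η then δ else -C)) volume y]
  refine integral_mono (hK.mul_bdd (c := δ + C) ?_ (.of_forall fun u => ?_))
    ((integrable_indicator_iff measurableSet_Ioi).2 (hK.bdd_mul hmeas.aestronglyMeasurable
      (.of_forall hC)).integrableOn) fun u => ?_
  · exact (Measurable.ite (measurableSet_le (by fun_prop) (by fun_prop)) measurable_const
      measurable_const).aestronglyMeasurable
  · rw [norm_eq_abs, abs_le]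
    constructor <;> split_ifs <;> linarith
  · have hstep : (if |y - u| ≤ η then δ else -C) ≤ h u := by
      split_ifs with hu
      exacts [hge u hu, (abs_le.1 (hC u)).1]
    by_cases hu : u ∈ Ioi (0 : ℝ)
    · rw [indicator_of_mem hu, mul_comm]
      exact mul_le_mul_of_nonneg_right hstep (fejerKernel_nonneg _)
    · have hfar : ¬ |y - u| ≤ η := by
        rw [mem_Ioi, not_lt] at hu
        rw [abs_of_pos (by linarith)]
        linarith
      rw [indicator_of_notMem hu, if_neg hfar]
      exact mul_nonpos_of_nonneg_of_nonpos (fejerKernel_nonneg _) (by linarith)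

variable {M : ℝ → ℝ}

lemma eventually_mul_exp_neg_lt (hM : Monotone M)
    (hwin : ∀ η > 0, ∀ δ > 0, ∀ᶠ y in atTop, ∃ u, |y - u| ≤ η ∧ M u * exp (-u) - 1 < δ)
    {η : ℝ} (hη : 0 < η) : ∀ᶠ y in atTop, M y * exp (-y) < exp (2 * η) := by
  have hshift := (tendsto_atTop_add_const_right atTop (η / 2) tendsto_id).eventually
    (hwin (η / 2) (by positivity) (exp η - 1) (by simpa using hη))
  filter_upwards [hshift] with y ⟨u, hu, hlt⟩
  simp only [id, abs_le] at hu
  by_contra! hge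
  refine hlt.not_ge (sub_le_sub_right ?_ 1)
  calc exp η ≤ exp (2 * η) * exp (y - u) := by rw [← exp_add, exp_le_exp]; linarith
    _ ≤ M y * exp (-y) * exp (y - u) := by gcongr
    _ = M y * exp (-u) := by rw [mul_assoc, ← exp_add]; ring_nf
    _ ≤ M u * exp (-u) := by gcongr; exact hM (by linarith)

lemma eventually_lt_mul_exp_neg (hM : Monotone M)
    (hwin : ∀ η > 0, ∀ δ > 0, ∀ᶠ y in atTop, ∃ u, |y - u| ≤ η ∧ -(M u * exp (-u) - 1) < δ)
    {η : ℝ} (hη : 0 < η) : ∀ᶠ y in atTop, exp (-(2 * η)) < M y * exp (-y) := by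
  have hshift := (tendsto_atTop_add_const_right atTop (-(η / 2)) tendsto_id).eventually
    (hwin (η / 2) (by positivity) (1 - exp (-η)) (by simpa using hη))
  filter_upwards [hshift] with y ⟨u, hu, hlt⟩
  simp only [id, abs_le] at hu
  by_contra! hle
  refine hlt.not_ge ?_
  have hupper : M u * exp (-u) ≤ exp (-η) :=
    calc M u * exp (-u) ≤ M y * exp (-u) := by gcongr; exact hM (by linarith)
      _ = M y * exp (-y) * exp (y - u) := by rw [mul_assoc, ← exp_add]; ring_nf
      _ ≤ exp (-(2 * η)) * exp (y - u) := by gcongr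
      _ ≤ exp (-η) := by rw [← exp_add, exp_le_exp]; linarith
  linarith

/-- The **Wiener–Ikehara theorem**, in the additive variable `u = log x`. -/
theorem tendsto_mul_exp_neg_of_laplace_continuousOn (hM : Monotone M)
    (hMC : ∀ u, |M u| ≤ C * exp u) (hGc : ContinuousOn G {s | 0 ≤ s.re})
    (hG : ∀ s : ℂ, 0 < s.re →
      G s = ∫ u in Ioi (0 : ℝ), ((M u * exp (-u) - 1 : ℝ) : ℂ) * Complex.exp (-s * u)) :
    Tendsto (fun u => M u * exp (-u)) atTop (𝓝 1) := by
  have hmeas : Measurable fun u => M u * exp (-u) - 1 :=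
    (hM.measurable.mul (by fun_prop)).sub_const 1
  have hbound (u : ℝ) : |M u * exp (-u) - 1| ≤ C + 1 := by
    have habs : |M u * exp (-u)| ≤ C := by
      rw [abs_mul, abs_of_pos (exp_pos _), exp_neg, ← div_eq_mul_inv, div_le_iff₀ (exp_pos u)]
      exact hMC u
    exact (abs_sub _ _).trans (by simpa using habs)
  have hlim (lam : ℝ) (hlam : 0 < lam) :=
    tendsto_integral_mul_fejerKernel hmeas hbound hGc hG hlam
  have hupper (η : ℝ) (hη : 0 < η) := eventually_mul_exp_neg_lt hM (fun η hη δ hδ =>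
    eventually_exists_lt_of_tendsto_integral_fejerKernel hmeas hbound hlim hη hδ) hη
  have hlower (η : ℝ) (hη : 0 < η) := eventually_lt_mul_exp_neg hM (fun η hη δ hδ =>
    eventually_exists_lt_of_tendsto_integral_fejerKernel hmeas.fun_neg
      (fun u => (abs_neg _).trans_le (hbound u))
      (fun lam hlam => by simpa only [neg_mul, integral_neg, neg_zero] using (hlim lam hlam).neg)
      hη hδ) hη
  have hexp (c : ℝ) : Tendsto (fun η => exp (c * η)) (𝓝[>] 0) (𝓝 1) := by
    have hcont : Continuous fun η => exp (c * η) := by fun_prop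
    simpa using (hcont.tendsto 0).mono_left nhdsWithin_le_nhds
  refine tendsto_order.2 ⟨fun a ha => ?_, fun a ha => ?_⟩
  · obtain ⟨η, haη, hη⟩ := (((hexp (-2)).eventually (lt_mem_nhds ha)).and
      self_mem_nhdsWithin).exists
    filter_upwards [hlower η hη] with y hy
    exact haη.trans (by simpa using hy)
  · obtain ⟨η, haη, hη⟩ := (((hexp 2).eventually (gt_mem_nhds ha)).and
      self_mem_nhdsWithin).exists
    filter_upwards [hupper η hη] with y hy using hy.trans haη

end WienerIkehara

section PrimeNumberTheorem

open ArithmeticFunction (vonMangoldt)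

lemma setIntegral_Ioi_one_mul_cpow (f : ℝ → ℂ) (s : ℂ) :
    ∫ t in Ioi (1 : ℝ), f t * (t : ℂ) ^ (-(s + 1))
      = ∫ u in Ioi (0 : ℝ), f (exp u) * Complex.exp (-s * u) := by
  have himage : exp '' Ioi (0 : ℝ) = Ioi 1 := by
    rw [← exp_zero]
    simp
  rw [← himage, integral_image_eq_integral_abs_deriv_smul measurableSet_Ioi
    (fun u _ => (hasDerivAt_exp u).hasDerivWithinAt) exp_injective.injOn]
  refine integral_congr_ae (.of_forall fun u => ?_)
  have hexp : Complex.exp u * Complex.exp (u * -(s + 1)) = Complex.exp (-s * u) := by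
    rw [← Complex.exp_add]
    ring_nf
  simp only [abs_exp, Complex.real_smul, Complex.ofReal_exp, ← hexp]
  rw [Complex.cpow_def_of_ne_zero (Complex.exp_ne_zero _), ← Complex.ofReal_exp,
    ← Complex.ofReal_log (exp_pos u).le, log_exp, Complex.ofReal_exp]
  ring

lemma sum_Icc_one_vonMangoldt (x : ℝ) :
    ∑ k ∈ Finset.Icc 1 ⌊x⌋₊, vonMangoldt k = Chebyshev.psi x := by
  rw [Chebyshev.psi_eq_sum_Icc, ← Finset.insert_Icc_succ_left_eq_Icc (Nat.zero_le _)]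
  simp

lemma LSeries_vonMangoldt_eq_mul_laplace {s : ℂ} (hs : 1 < s.re) :
    LSeries (fun n => (vonMangoldt n : ℂ)) s
      = s * ∫ u in Ioi (0 : ℝ), (Chebyshev.psi (exp u) : ℂ) * Complex.exp (-s * u) := by
  have hO : (fun n : ℕ => ∑ k ∈ Finset.Icc 1 n, vonMangoldt k) =O[atTop]
      fun n => (n : ℝ) ^ (1 : ℝ) := by
    refine Asymptotics.IsBigO.of_bound (log 4 + 4) (.of_forall fun n => ?_)
    have hsum := sum_Icc_one_vonMangoldt n
    rw [Nat.floor_natCast] at hsum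
    rw [hsum, rpow_one, norm_of_nonneg (Chebyshev.psi_nonneg _), norm_of_nonneg (by positivity)]
    exact Chebyshev.psi_le_const_mul_self (by positivity)
  rw [LSeries_eq_mul_integral_of_nonneg _ zero_le_one hs hO fun n =>
    ArithmeticFunction.vonMangoldt_nonneg]
  simp only [← Complex.ofReal_sum, sum_Icc_one_vonMangoldt]
  rw [setIntegral_Ioi_one_mul_cpow fun t => (Chebyshev.psi t : ℂ)]

lemma laplace_psi_exp_mul_exp_neg_sub_one {s : ℂ} (hs : 0 < s.re) :
    ∫ u in Ioi (0 : ℝ), ((Chebyshev.psi (exp u) * exp (-u) - 1 : ℝ) : ℂ) * Complex.exp (-s * u)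
      = (∫ u in Ioi (0 : ℝ), (Chebyshev.psi (exp u) : ℂ) * Complex.exp (-(s + 1) * u)) - 1 / s := by
  have : s ≠ 0 := by
    rintro rfl
    simp at hs
  have hone : ∫ u in Ioi (0 : ℝ), Complex.exp (-s * u) = 1 / s := by
    rw [integral_exp_mul_complex_Ioi (by simpa using hs)]
    simp [neg_div_neg_eq]
  have hint : IntegrableOn (fun u : ℝ => Complex.exp (-s * u)) (Ioi 0) :=
    integrableOn_exp_mul_complex_Ioi (by simpa using hs) 0
  have hbound (u : ℝ) : ‖((Chebyshev.psi (exp u) * exp (-u) : ℝ) : ℂ)‖ ≤ log 4 + 4 := by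
    rw [Complex.norm_real, norm_of_nonneg (mul_nonneg (Chebyshev.psi_nonneg _) (exp_pos _).le),
      exp_neg, ← div_eq_mul_inv, div_le_iff₀ (exp_pos u)]
    exact Chebyshev.psi_le_const_mul_self (exp_pos u).le
  have hmeas : Measurable fun u => ((Chebyshev.psi (exp u) * exp (-u) : ℝ) : ℂ) := by
    have := Chebyshev.psi_mono.measurable
    fun_prop
  rw [← hone, ← integral_sub _ hint]
  · refine integral_congr_ae (.of_forall fun u => ?_)
    have hexp : Complex.exp (-(s + 1) * u) = Complex.exp (-u) * Complex.exp (-s * u) := by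
      rw [← Complex.exp_add]
      ring_nf
    simp only [hexp]
    push_cast
    ring
  · refine (hint.bdd_mul hmeas.aestronglyMeasurable (.of_forall hbound)).congr
      (.of_forall fun u => ?_)
    simp only [Complex.ofReal_mul, Complex.ofReal_exp, mul_assoc, ← Complex.exp_add]
    push_cast
    ring_nf

/-- The continuous extension to `0 ≤ re s` of the Laplace transform of `ψ(eᵘ)e⁻ᵘ - 1`. It comes from
the extension of `-ζ'/ζ` minus its pole, which is the case of modulus `1` of Mathlib's
`LFunctionResidueClassAux`. -/
noncomputable def psiLaplace (s : ℂ) : ℂ :=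
  (vonMangoldt.LFunctionResidueClassAux (q := 1) 1 (s + 1) - 1) / (s + 1)

lemma continuousOn_psiLaplace : ContinuousOn psiLaplace {s | 0 ≤ s.re} := by
  have hshift : MapsTo (fun s : ℂ => s + 1) {s | 0 ≤ s.re} {s | 1 ≤ s.re} := by
    intro s (hs : 0 ≤ s.re)
    simpa using hs
  refine (((vonMangoldt.continuousOn_LFunctionResidueClassAux 1).comp
    (by fun_prop) hshift).sub continuousOn_const).div (by fun_prop) fun s hs h0 => ?_
  have := hshift hs
  norm_num [h0] at this

lemma psiLaplace_eq {s : ℂ} (hs : 0 < s.re) :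
    psiLaplace s = ∫ u in Ioi (0 : ℝ),
      ((Chebyshev.psi (exp u) * exp (-u) - 1 : ℝ) : ℂ) * Complex.exp (-s * u) := by
  have hs0 : s ≠ 0 := by
    rintro rfl
    simp at hs
  have hs1 : s + 1 ≠ 0 := by
    intro h
    rw [eq_neg_of_add_eq_zero_left h] at hs
    norm_num at hs
  have hs' : 1 < (s + 1).re := by simpa using hs
  have hres : vonMangoldt.residueClass (1 : ZMod 1) = vonMangoldt := by
    ext n
    simp [vonMangoldt.residueClass, Subsingleton.elim (n : ZMod 1) 1]
  have haux := vonMangoldt.eqOn_LFunctionResidueClassAux (q := 1) (a := 1) isUnit_one hs'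
  simp only [hres, Nat.totient_one, Nat.cast_one, inv_one, add_sub_cancel_right] at haux
  rw [psiLaplace, haux, laplace_psi_exp_mul_exp_neg_sub_one hs,
    LSeries_vonMangoldt_eq_mul_laplace hs']
  field_simp
  ring

theorem tendsto_psi_div : Tendsto (fun x => Chebyshev.psi x / x) atTop (𝓝 1) := by
  have hlim : Tendsto (fun u => Chebyshev.psi (exp u) * exp (-u)) atTop (𝓝 1) := by
    refine tendsto_mul_exp_neg_of_laplace_continuousOn (C := log 4 + 4)
      (Chebyshev.psi_mono.comp exp_monotone) (fun u => ?_) continuousOn_psiLaplace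
      fun s => psiLaplace_eq
    rw [abs_of_nonneg (Chebyshev.psi_nonneg _)]
    exact Chebyshev.psi_le_const_mul_self (exp_pos u).le
  refine (hlim.comp tendsto_log_atTop).congr' ?_
  filter_upwards [eventually_gt_atTop 0] with x hx
  simp [exp_log hx, exp_neg, div_eq_mul_inv]

theorem tendsto_theta_div : Tendsto (fun x => Chebyshev.theta x / x) atTop (𝓝 1) := by
  have hsqrt : sqrt =o[atTop] id :=
    Asymptotics.isLittleO_of_tendsto (by simp +contextual)
      ((tendsto_inv_atTop_zero.comp tendsto_sqrt_atTop).congr fun x => sqrt_div_self.symm)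
  have hdiff : Tendsto (fun x => (Chebyshev.psi x - Chebyshev.theta x) / x) atTop (𝓝 0) :=
    (Chebyshev.isBigO_psi_sub_theta_sqrt.trans_isLittleO hsqrt).tendsto_div_nhds_zero
  refine (by simpa using tendsto_psi_div.sub hdiff : Tendsto _ _ (𝓝 (1 : ℝ))).congr fun x => ?_
  ring

lemma tendsto_const_mul_natCast_div {f : ℝ → ℝ} (hf : Tendsto (fun x => f x / x) atTop (𝓝 1))
    {c : ℝ} (hc : 0 < c) : Tendsto (fun n : ℕ => f (c * n) / n) atTop (𝓝 c) := by
  have hcomp := (hf.comp (tendsto_natCast_atTop_atTop.const_mul_atTop hc)).const_mul c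
  rw [mul_one] at hcomp
  refine hcomp.congr fun n => ?_
  simp only [Function.comp_apply]
  field_simp

end PrimeNumberTheorem

section DiophantineApproximation

variable {α : ℝ}

-- If `P / Q = p / q` this is an equality; otherwise `|P q - Q p| ≥ 1`, and the smallness of the
-- linear form leaves at least `1 / 2` for the term `q |Q| |α - p / q|`.
lemma abs_sub_mul_le_mul_abs_sub_div {P Q p : ℤ} {q : ℕ} (hq : 0 < q)
    (hsmall : q * |P - Q * α| ≤ 1 / 2) : |P - Q * α| ≤ |(Q : ℝ)| * |α - p / q| := by
  have hq0 : (0 : ℝ) < q := by exact_mod_cast hq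
  have hdecomp : ((P * q - Q * p : ℤ) : ℝ) = q * (P - Q * α) + q * (Q * (α - p / q)) := by
    push_cast
    field_simp
    ring
  rw [← abs_mul]
  by_cases hzero : P * q - Q * p = 0
  · rw [hzero, Int.cast_zero, ← mul_add, eq_comm, mul_eq_zero_iff_left hq0.ne'] at hdecomp
    rw [eq_neg_of_add_eq_zero_left hdecomp, abs_neg]
  · have hone : (1 : ℝ) ≤ |((P * q - Q * p : ℤ) : ℝ)| := by exact_mod_cast Int.one_le_abs hzero
    have htri := abs_add_le (q * (P - Q * α)) (q * (Q * (α - p / q)))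
    rw [← hdecomp, abs_mul, abs_mul, Nat.abs_cast] at htri
    exact le_of_mul_le_mul_left (by linarith) hq0

lemma irrational_of_forall_exists_int_add_mul
    (h : ∀ ε > 0, ∃ P Q : ℤ, 0 < |P + Q * α| ∧ |P + Q * α| < ε) : Irrational α := by
  rintro ⟨r, rfl⟩
  have hden : (0 : ℝ) < r.den := by exact_mod_cast r.pos
  obtain ⟨P, Q, hpos, hlt⟩ := h (1 / r.den) (by positivity)
  have hint : ((P * r.den + Q * r.num : ℤ) : ℝ) = r.den * (P + Q * r) := by
    rw [Rat.cast_def]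
    push_cast
    field_simp
  have hne : P * r.den + Q * r.num ≠ 0 := by
    intro h0
    rw [h0, Int.cast_zero, eq_comm, mul_eq_zero_iff_left hden.ne'] at hint
    simp [hint] at hpos
  have hone : (1 : ℝ) ≤ |((P * r.den + Q * r.num : ℤ) : ℝ)| := by
    exact_mod_cast Int.one_le_abs hne
  rw [hint, abs_mul, Nat.abs_cast] at hone
  rw [lt_div_iff₀ hden] at hlt
  linarith

lemma finite_setOf_abs_sub_div_lt_rpow_neg {κ : ℝ} (hκ : 0 ≤ κ)
    (h : ∀ᶠ q : ℕ in atTop, ∀ p : ℤ, (q : ℝ) ^ (-κ) ≤ |α - p / q|) :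
    {pq : ℤ × ℕ+ | |α - (pq.1 : ℝ) / ((pq.2 : ℕ) : ℝ)| < ((pq.2 : ℕ) : ℝ) ^ (-κ)}.Finite := by
  obtain ⟨N, hN⟩ := eventually_atTop.1 h
  set B := ⌈(|α| + 1) * N⌉
  have hfin : ((Icc (-B) B) ×ˢ {q : ℕ+ | (q : ℕ) ≤ N}).Finite :=
    (finite_Icc _ _).prod ((finite_Iic N).preimage PNat.coe_injective.injOn)
  refine hfin.subset ?_
  rintro ⟨p, q⟩ (hlt : |α - p / (q : ℕ)| < ((q : ℕ) : ℝ) ^ (-κ))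
  have hqN : (q : ℕ) ≤ N := by
    by_contra! hgt
    exact (hN q hgt.le p).not_gt hlt
  have hq1 : (1 : ℝ) ≤ (q : ℕ) := by exact_mod_cast q.pos
  have hpq : |(p : ℝ) / (q : ℕ)| ≤ |α| + 1 := by
    have hle := rpow_le_one_of_one_le_of_nonpos hq1 (neg_nonpos.2 hκ)
    have htri := abs_sub_abs_le_abs_sub ((p : ℝ) / (q : ℕ)) α
    rw [abs_sub_comm] at htri
    linarith
  have hp : |(p : ℝ)| ≤ B := by
    rw [abs_div, Nat.abs_cast, div_le_iff₀ (by linarith)] at hpq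
    refine (hpq.trans ?_).trans (Int.le_ceil _)
    gcongr
  rw [abs_le] at hp
  exact ⟨⟨by exact_mod_cast hp.1, by exact_mod_cast hp.2⟩, hqN⟩

variable {E : ℕ → ℝ} {s T κ : ℝ}

lemma eventually_exp_le_abs_le_exp (hs : 0 < s)
    (hE : Tendsto (fun n : ℕ => log |E n| / n) atTop (𝓝 (-s))) {s₁ s₂ : ℝ} (h₁ : s < s₁)
    (h₂ : s₂ < s) :
    ∀ᶠ n : ℕ in atTop, exp (-(s₁ * n)) ≤ |E n| ∧ |E n| ≤ exp (-(s₂ * n)) := by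
  filter_upwards [hE.eventually (lt_mem_nhds (neg_lt_neg h₁)),
    hE.eventually (gt_mem_nhds (neg_lt_neg h₂)), hE.eventually (gt_mem_nhds (neg_lt_zero.2 hs)),
    eventually_gt_atTop 0] with n hlow hup hneg hn
  have hn0 : (0 : ℝ) < n := by exact_mod_cast hn
  have hpos : 0 < |E n| := by
    refine abs_pos.2 fun h0 => ?_
    simp [h0] at hneg
  rw [lt_div_iff₀ hn0] at hlow
  rw [div_lt_iff₀ hn0] at hup
  exact ⟨(le_log_iff_exp_le hpos).1 (by linarith), (log_le_iff_le_exp hpos).1 (by linarith)⟩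

lemma exists_rates_div_lt (hs : 0 < s) (hκ : 1 + T / s < κ) :
    ∃ s₁ s₂, s < s₁ ∧ 0 < s₂ ∧ s₂ < s ∧ (s₁ + T) / s₂ < κ := by
  have hcont : ContinuousAt (fun δ => (s + δ + T) / (s - δ)) 0 :=
    ContinuousAt.div (by fun_prop) (by fun_prop) (by simpa using hs.ne')
  have hlim : (s + 0 + T) / (s - 0) < κ := by
    rw [add_zero, sub_zero, add_div, div_self hs.ne']
    exact hκ
  have hnear : ∀ᶠ δ in 𝓝[>] (0 : ℝ), (s + δ + T) / (s - δ) < κ ∧ δ < s :=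
    ((hcont.eventually (gt_mem_nhds hlim)).and (gt_mem_nhds hs)).filter_mono nhdsWithin_le_nhds
  obtain ⟨δ, ⟨hlt, hδs⟩, hδ⟩ := (hnear.and self_mem_nhdsWithin).exists
  exact ⟨s + δ, s - δ, by linarith, by linarith, by linarith, hlt⟩

/-- **Hata's lemma**: linear forms `P - Q α` with integer coefficients and exact decay rate
`exp (-s n)`, whose coefficients `Q` grow at most like `exp (T n)`, bound the irrationality measure
of `α` by `1 + T / s`. -/
theorem eventually_rpow_neg_le_abs_sub_div (hs : 0 < s) (hT : 0 ≤ T) (hκ : 1 + T / s < κ)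
    (hE : Tendsto (fun n : ℕ => log |E n| / n) atTop (𝓝 (-s)))
    (hform : ∀ᶠ n : ℕ in atTop, ∃ P Q : ℤ, P - Q * α = E n ∧ |(Q : ℝ)| ≤ exp (T * n)) :
    ∀ᶠ q : ℕ in atTop, ∀ p : ℤ, (q : ℝ) ^ (-κ) ≤ |α - p / q| := by
  obtain ⟨s₁, s₂, h₁, hs₂, h₂, hrate⟩ := exists_rates_div_lt hs hκ
  have hlog : Tendsto (fun q : ℕ => log q) atTop atTop :=
    tendsto_log_atTop.comp tendsto_natCast_atTop_atTop
  have hx : Tendsto (fun q : ℕ => (log 2 + log q) / s₂) atTop atTop :=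
    (tendsto_atTop_add_const_left _ _ hlog).atTop_div_const hs₂
  have hindex : Tendsto (fun q : ℕ => ⌊(log 2 + log q) / s₂⌋₊ + 1) atTop atTop :=
    (tendsto_add_atTop_nat 1).comp (tendsto_nat_floor_atTop.comp hx)
  have hlarge := (hlog.const_mul_atTop (sub_pos.2 hrate)).eventually_ge_atTop
    ((s₁ + T) * (log 2 / s₂ + 1))
  filter_upwards [hindex.eventually (hform.and (eventually_exp_le_abs_le_exp hs hE h₁ h₂)),
    hlarge, hx.eventually_ge_atTop 0, eventually_gt_atTop 0] with q ⟨⟨P, Q, hPQ, hQ⟩, hlow, hup⟩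
      hq hx0 hqpos p
  set n := ⌊(log 2 + log q) / s₂⌋₊ + 1
  have hn_gt : log 2 + log q < s₂ * n := by
    rw [← div_lt_iff₀' hs₂]
    exact_mod_cast Nat.lt_floor_add_one _
  have hn_le : (n : ℝ) ≤ (log 2 + log q) / s₂ + 1 := by
    push_cast [n]
    linarith [Nat.floor_le hx0]
  have hq0 : (0 : ℝ) < q := by exact_mod_cast hqpos
  have hsmall : q * |P - Q * α| ≤ 1 / 2 :=
    calc q * |P - Q * α| ≤ q * exp (-(log 2 + log q)) := by
          rw [hPQ]
          gcongr
          exact hup.trans (by gcongr)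
      _ = 1 / 2 := by
        rw [neg_add, exp_add, exp_neg, exp_neg, exp_log two_pos, exp_log hq0]
        field_simp
  have hform_le := abs_sub_mul_le_mul_abs_sub_div (p := p) hqpos hsmall
  have hexp : exp (-(s₁ * n)) ≤ exp (T * n) * |α - p / q| := by
    rw [hPQ] at hform_le
    exact (hlow.trans hform_le).trans (by gcongr)
  calc (q : ℝ) ^ (-κ) = exp (-(κ * log q)) := by rw [rpow_def_of_pos hq0]; ring_nf
    _ ≤ exp (-((s₁ + T) * n)) := by
      refine exp_le_exp.2 (neg_le_neg ?_)
      calc (s₁ + T) * n ≤ (s₁ + T) * ((log 2 + log q) / s₂ + 1) := by gcongr; linarith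
        _ = (s₁ + T) * (log 2 / s₂ + 1) + (s₁ + T) / s₂ * log q := by ring
        _ ≤ κ * log q := by linarith
    _ = exp (-(s₁ * n)) / exp (T * n) := by rw [← exp_sub]; ring_nf
    _ ≤ |α - p / q| := by rwa [div_le_iff₀' (exp_pos _)]

end DiophantineApproximation

section LaplaceMethod

variable {f g : ℝ → ℝ} {a b x₀ : ℝ}

lemma exists_pos_mul_pow_le_integral_mul_pow (hab : a < b) (hf : ContinuousOn f (Icc a b))
    (hf0 : ∀ x ∈ Icc a b, 0 ≤ f x) (hg : ContinuousOn g (Icc a b)) (hg0 : ∀ x ∈ Icc a b, 0 < g x)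
    (hx₀ : x₀ ∈ Icc a b) {y : ℝ} (hy0 : 0 ≤ y) (hy : y < f x₀) :
    ∃ A > 0, ∀ n : ℕ, A * y ^ n ≤ ∫ x in a..b, g x * f x ^ n := by
  obtain ⟨δ, hδ, hnear⟩ :=
    Metric.mem_nhdsWithin_iff.1 ((hf x₀ hx₀).eventually (lt_mem_nhds hy))
  set c := max a (x₀ - δ / 2)
  set d := min b (x₀ + δ / 2)
  have hcd : c < d :=
    max_lt (lt_min hab (by linarith [hx₀.1])) (lt_min (by linarith [hx₀.2]) (by linarith))
  have hsub : Icc c d ⊆ Icc a b := Icc_subset_Icc (le_max_left _ _) (min_le_left _ _)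
  have hfcd (x : ℝ) (hx : x ∈ Icc c d) : y < f x := by
    refine hnear ⟨?_, hsub hx⟩
    rw [Metric.mem_ball, Real.dist_eq, abs_lt]
    constructor <;> linarith [(le_max_right a (x₀ - δ / 2)).trans hx.1,
      hx.2.trans (min_le_right b (x₀ + δ / 2))]
  have hint (n : ℕ) : ContinuousOn (fun x => g x * f x ^ n) (Icc a b) := hg.mul (hf.pow n)
  refine ⟨∫ x in c..d, g x, ?_, fun n => ?_⟩
  · exact intervalIntegral.intervalIntegral_pos_of_pos_on
      ((hg.mono hsub).intervalIntegrable_of_Icc hcd.le)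
      (fun x hx => hg0 x (hsub (Ioo_subset_Icc_self hx))) hcd
  · calc (∫ x in c..d, g x) * y ^ n = ∫ x in c..d, g x * y ^ n :=
          (intervalIntegral.integral_mul_const _ _).symm
      _ ≤ ∫ x in c..d, g x * f x ^ n := by
          refine intervalIntegral.integral_mono_on hcd.le
            (((hg.mono hsub).mul continuousOn_const).intervalIntegrable_of_Icc hcd.le)
            (((hint n).mono hsub).intervalIntegrable_of_Icc hcd.le) fun x hx => ?_
          exact mul_le_mul_of_nonneg_left (pow_le_pow_left₀ hy0 (hfcd x hx).le n)
            (hg0 x (hsub hx)).le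
      _ ≤ ∫ x in a..b, g x * f x ^ n := by
          refine intervalIntegral.integral_mono_interval (le_max_left _ _) hcd.le (min_le_left _ _)
            ?_ ((hint n).intervalIntegrable_of_Icc hab.le)
          filter_upwards [ae_restrict_mem measurableSet_Ioc] with x hx
          exact mul_nonneg (hg0 x (Ioc_subset_Icc_self hx)).le
            (pow_nonneg (hf0 x (Ioc_subset_Icc_self hx)) n)

lemma log_mul_pow_div {A x : ℝ} {n : ℕ} (hA : A ≠ 0) (hx : x ≠ 0) (hn : n ≠ 0) :
    log (A * x ^ n) / n = log A / n + log x := by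
  rw [log_mul hA (pow_ne_zero n hx), log_pow]
  field_simp

theorem tendsto_log_integral_mul_pow_div (hab : a < b) (hf : ContinuousOn f (Icc a b))
    (hf0 : ∀ x ∈ Icc a b, 0 ≤ f x) (hg : ContinuousOn g (Icc a b)) (hg0 : ∀ x ∈ Icc a b, 0 < g x)
    (hx₀ : x₀ ∈ Icc a b) (hmax : IsMaxOn f (Icc a b) x₀) (hpos : 0 < f x₀) :
    Tendsto (fun n : ℕ => log (∫ x in a..b, g x * f x ^ n) / n) atTop (𝓝 (log (f x₀))) := by
  have hlim (A z : ℝ) : Tendsto (fun n : ℕ => log A / n + z) atTop (𝓝 z) := by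
    simpa using (tendsto_const_div_atTop_nhds_zero_nat (log A)).add_const z
  have hlow (z : ℝ) (hz : z < log (f x₀)) :
      ∃ A, ∀ᶠ n : ℕ in atTop, 0 < ∫ x in a..b, g x * f x ^ n ∧
        log A / n + z ≤ log (∫ x in a..b, g x * f x ^ n) / n := by
    obtain ⟨A, hA, hle⟩ := exists_pos_mul_pow_le_integral_mul_pow hab hf hf0 hg hg0 hx₀
      (exp_pos z).le ((lt_log_iff_exp_lt hpos).1 hz)
    refine ⟨A, ?_⟩
    filter_upwards [eventually_gt_atTop 0] with n hn
    have hApow : 0 < A * exp z ^ n := by positivity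
    refine ⟨hApow.trans_le (hle n), ?_⟩
    calc log A / n + z = log (A * exp z ^ n) / n := by
          rw [log_mul_pow_div hA.ne' (exp_ne_zero z) hn.ne', log_exp]
      _ ≤ _ := by gcongr; exact hle n
  have hup : ∀ᶠ n : ℕ in atTop, log (∫ x in a..b, g x * f x ^ n) / n
      ≤ log (∫ x in a..b, g x) / n + log (f x₀) := by
    obtain ⟨A, hA⟩ := hlow (log (f x₀) - 1) (by linarith)
    filter_upwards [hA, eventually_gt_atTop 0] with n hn hn0
    have hle : ∫ x in a..b, g x * f x ^ n ≤ (∫ x in a..b, g x) * f x₀ ^ n := by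
      rw [← intervalIntegral.integral_mul_const]
      refine intervalIntegral.integral_mono_on hab.le
        ((hg.mul (hf.pow n)).intervalIntegrable_of_Icc hab.le)
        ((hg.mul continuousOn_const).intervalIntegrable_of_Icc hab.le) fun x hx => ?_
      exact mul_le_mul_of_nonneg_left (pow_le_pow_left₀ (hf0 x hx) (hmax hx) n) (hg0 x hx).le
    have hgpos : 0 < ∫ x in a..b, g x :=
      intervalIntegral.intervalIntegral_pos_of_pos_on (hg.intervalIntegrable_of_Icc hab.le)
        (fun x hx => hg0 x (Ioo_subset_Icc_self hx)) hab
    rw [← log_mul_pow_div hgpos.ne' hpos.ne' hn0.ne']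
    gcongr
    exact hn.1
  refine tendsto_order.2 ⟨fun z hz => ?_, fun z hz => ?_⟩
  · obtain ⟨z', hzz', hz'⟩ := exists_between hz
    obtain ⟨A, hA⟩ := hlow z' hz'
    filter_upwards [hA, (hlim A z').eventually (lt_mem_nhds hzz')] with n hn hlt
    exact hlt.trans_le hn.2
  · filter_upwards [hup, (hlim _ _).eventually (gt_mem_nhds hz)] with n hn hlt using hn.trans_lt hlt

end LaplaceMethod

section RationalIntegral

/-- The integrals `∫ t²ᵃ (1 - t²)ᵇ / (N - t²)ᶜ` over `[-1, 1]`: `rationalIntegral N 0 0 1` is the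
logarithm under study, up to a factor, and the others are rational linear forms in it and `1`. -/
noncomputable def rationalIntegral (N : ℝ) (a b c : ℕ) : ℝ :=
  ∫ t in (-1 : ℝ)..1, t ^ (2 * a) * (1 - t ^ 2) ^ b / (N - t ^ 2) ^ c

variable {N : ℝ}

lemma sq_le_one_of_mem_uIcc {t : ℝ} (ht : t ∈ uIcc (-1 : ℝ) 1) : t ^ 2 ≤ 1 := by
  rwa [uIcc_of_le (by norm_num), mem_Icc, ← abs_le, ← sq_le_one_iff_abs_le_one] at ht

lemma sub_sq_pos (hN : 1 < N) {t : ℝ} (ht : t ∈ uIcc (-1 : ℝ) 1) : 0 < N - t ^ 2 := by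
  linarith [sq_le_one_of_mem_uIcc ht]

lemma hasDerivAt_const_sub_sq (x t : ℝ) : HasDerivAt (fun t : ℝ => x - t ^ 2) (-(2 * t)) t := by
  simpa using (hasDerivAt_pow 2 t).const_sub x

lemma intervalIntegrable_div_sub_sq_pow (hN : 1 < N) {p : ℝ → ℝ} (hp : Continuous p) (c : ℕ) :
    IntervalIntegrable (fun t => p t / (N - t ^ 2) ^ c) volume (-1) 1 :=
  (hp.continuousOn.div (by fun_prop) fun _ ht =>
    pow_ne_zero _ (sub_sq_pos hN ht).ne').intervalIntegrable

lemma intervalIntegrable_rationalIntegral (hN : 1 < N) (a b c : ℕ) :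
    IntervalIntegrable (fun t => t ^ (2 * a) * (1 - t ^ 2) ^ b / (N - t ^ 2) ^ c) volume (-1) 1 :=
  intervalIntegrable_div_sub_sq_pow hN (by fun_prop) c

lemma rationalIntegral_pos (hN : 1 < N) (a b c : ℕ) : 0 < rationalIntegral N a b c := by
  refine intervalIntegral.integral_pos (by norm_num) ?_ (fun t ht => ?_) ⟨1 / 2, by norm_num, ?_⟩
  · rw [← uIcc_of_le (by norm_num)]
    exact ContinuousOn.div (by fun_prop) (by fun_prop)
      fun t ht => pow_ne_zero _ (sub_sq_pos hN ht).ne'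
  · have ht' : t ∈ uIcc (-1 : ℝ) 1 := by
      rw [uIcc_of_le (by norm_num)]
      exact Ioc_subset_Icc_self ht
    have h₁ : 0 ≤ 1 - t ^ 2 := sub_nonneg.2 (sq_le_one_of_mem_uIcc ht')
    have h₂ := sub_sq_pos hN ht'
    rw [pow_mul]
    positivity
  · have h : 0 < N - (1 / 2) ^ 2 := by linarith
    have : (0 : ℝ) < 1 - (1 / 2) ^ 2 := by norm_num
    positivity

lemma rationalIntegral_succ_left (hN : 1 < N) (a b c : ℕ) :
    rationalIntegral N (a + 1) b c = rationalIntegral N a b c - rationalIntegral N a (b + 1) c := by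
  simp only [rationalIntegral]
  rw [← intervalIntegral.integral_sub (intervalIntegrable_rationalIntegral hN a b c)
    (intervalIntegrable_rationalIntegral hN a (b + 1) c)]
  congr 1 with t
  ring

lemma rationalIntegral_succ_right (hN : 1 < N) (a b c : ℕ) :
    (N - 1) * rationalIntegral N a b (c + 1)
      = rationalIntegral N a b c - rationalIntegral N a (b + 1) (c + 1) := by
  simp only [rationalIntegral]
  rw [← intervalIntegral.integral_const_mul, ← intervalIntegral.integral_sub
    (intervalIntegrable_rationalIntegral hN a b c)
    (intervalIntegrable_rationalIntegral hN a (b + 1) (c + 1))]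
  refine intervalIntegral.integral_congr fun t ht => ?_
  have hw := (sub_sq_pos hN ht).ne'
  field_simp
  ring

lemma rationalIntegral_integral_by_parts (hN : 1 < N) (a b c : ℕ) :
    (2 * a + 1) * rationalIntegral N a b c + 2 * c * rationalIntegral N (a + 1) b (c + 1)
      = 2 * b * rationalIntegral N (a + 1) (b - 1) c + 2 * 0 ^ b / (N - 1) ^ c := by
  have hint := intervalIntegrable_rationalIntegral hN
  have hderiv (t : ℝ) (ht : t ∈ uIcc (-1 : ℝ) 1) :
      HasDerivAt (fun t : ℝ => t ^ (2 * a + 1) * (1 - t ^ 2) ^ b / (N - t ^ 2) ^ c)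
        ((2 * a + 1) * (t ^ (2 * a) * (1 - t ^ 2) ^ b / (N - t ^ 2) ^ c)
          + 2 * c * (t ^ (2 * (a + 1)) * (1 - t ^ 2) ^ b / (N - t ^ 2) ^ (c + 1))
          - 2 * b * (t ^ (2 * (a + 1)) * (1 - t ^ 2) ^ (b - 1) / (N - t ^ 2) ^ c)) t := by
    have hw := (sub_sq_pos hN ht).ne'
    have h := ((hasDerivAt_pow (2 * a + 1) t).mul ((hasDerivAt_const_sub_sq 1 t).pow b)).div
      ((hasDerivAt_const_sub_sq N t).pow c) (pow_ne_zero c hw)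
    refine h.congr_deriv ?_
    simp only [Nat.add_sub_cancel, Pi.pow_apply, Pi.mul_apply]
    rcases c with _ | c
    · push_cast
      simp
      ring
    · simp only [Nat.add_sub_cancel]
      field_simp
      push_cast
      ring
  have h := intervalIntegral.integral_eq_sub_of_hasDerivAt hderiv
    ((((hint a b c).const_mul _).add ((hint (a + 1) b (c + 1)).const_mul _)).sub
      ((hint (a + 1) (b - 1) c).const_mul _))
  rw [intervalIntegral.integral_sub (((hint a b c).const_mul _).add
    ((hint (a + 1) b (c + 1)).const_mul _)) ((hint (a + 1) (b - 1) c).const_mul _),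
    intervalIntegral.integral_add ((hint a b c).const_mul _)
    ((hint (a + 1) b (c + 1)).const_mul _)] at h
  simp only [intervalIntegral.integral_const_mul, ← rationalIntegral.eq_def] at h
  have hodd : (-1 : ℝ) ^ (2 * a + 1) = -1 := Odd.neg_one_pow ⟨a, rfl⟩
  simp only [hodd, even_two.neg_pow, one_pow, sub_self] at h
  linear_combination h

lemma rationalIntegral_zero_zero_succ (hN : 1 < N) (m : ℕ) :
    2 * N * m * rationalIntegral N 0 0 (m + 1)
      = (2 * m - 1) * rationalIntegral N 0 0 m + 2 / (N - 1) ^ m := by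
  have hparts := rationalIntegral_integral_by_parts hN 0 0 m
  have hleft := rationalIntegral_succ_left hN 0 0 (m + 1)
  have hright := rationalIntegral_succ_right hN 0 0 m
  push_cast at hparts
  linear_combination hparts - 2 * m * hleft + 2 * m * hright

lemma mul_centralBinom_mul_rationalIntegral (hN : 1 < N) (b : ℕ) :
    (2 * b + 1) * b.centralBinom * rationalIntegral N 0 b 0 = 2 * 4 ^ b := by
  induction b with
  | zero =>
    simp [rationalIntegral]
    norm_num
  | succ b ih =>
    have hbinom : ((b : ℝ) + 1) * (b + 1).centralBinom = 2 * (2 * b + 1) * b.centralBinom := by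
      exact_mod_cast Nat.succ_mul_centralBinom_succ b
    have hparts := rationalIntegral_integral_by_parts hN 0 (b + 1) 0
    have hleft := rationalIntegral_succ_left hN 0 b 0
    push_cast at hparts ⊢
    linear_combination (b + 1).centralBinom * (hparts + 2 * (b + 1) * hleft)
      + 2 * rationalIntegral N 0 b 0 * hbinom + 4 * ih

lemma four_mul_pow_mul_rationalIntegral_zero (hN : 1 < N) (a : ℕ) :
    (4 * (N - 1)) ^ a * rationalIntegral N a 0 (a + 1)
      = a.centralBinom * rationalIntegral N 0 a 1 := by
  induction a with
  | zero => simp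
  | succ a ih =>
    have hbinom : ((a : ℝ) + 1) * (a + 1).centralBinom = 2 * (2 * a + 1) * a.centralBinom := by
      exact_mod_cast Nat.succ_mul_centralBinom_succ a
    have hparts := rationalIntegral_integral_by_parts hN a 0 (a + 1)
    have hright := rationalIntegral_succ_right hN 0 a 0
    have hwallis := mul_centralBinom_mul_rationalIntegral hN a
    have hboundary :
        (4 * (N - 1)) ^ (a + 1) * (2 * 0 ^ 0 / (N - 1) ^ (a + 1)) = 2 * 4 ^ (a + 1) := by
      have : N - 1 ≠ 0 := by linarith
      rw [mul_pow]
      field_simp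
    refine mul_left_cancel₀ (a := (a : ℝ) + 1) (by positivity) ?_
    push_cast at hparts
    linear_combination (1 / 2) * hboundary + (1 / 2) * (4 * (N - 1)) ^ (a + 1) * hparts
      - rationalIntegral N 0 (a + 1) 1 * hbinom - 2 * hwallis
      - 2 * (N - 1) * (2 * a + 1) * ih - (2 * (2 * a + 1)) * a.centralBinom * hright

lemma rationalIntegral_succ_middle (hN : 1 < N) (a b : ℕ) :
    (2 * b + 1) * rationalIntegral N a (b + 1) (a + 1)
      = 2 * (N - 1) * (a + 1) * rationalIntegral N (a + 1) b (a + 2)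
        - 2 * (a - b) * rationalIntegral N a b (a + 1) := by
  have hparts := rationalIntegral_integral_by_parts hN a (b + 1) (a + 1)
  have hleft := rationalIntegral_succ_left hN a b (a + 1)
  have hright := rationalIntegral_succ_right hN (a + 1) b (a + 1)
  push_cast at hparts
  rw [zero_pow (Nat.succ_ne_zero b)] at hparts
  linear_combination hparts - 2 * (a + 1) * hright + 2 * (b - a) * hleft

-- Both sides obey the same recurrence `rationalIntegral_succ_middle` in `a` and `b`.
theorem centralBinom_mul_rationalIntegral_comm (hN : 1 < N) (a b : ℕ) :
    b.centralBinom * (4 * (N - 1)) ^ a * rationalIntegral N a b (a + 1)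
      = a.centralBinom * (4 * (N - 1)) ^ b * rationalIntegral N b a (b + 1) := by
  induction b generalizing a with
  | zero => simpa using four_mul_pow_mul_rationalIntegral_zero hN a
  | succ b ih =>
    have hbinom (m : ℕ) :
        ((m : ℝ) + 1) * (m + 1).centralBinom = 2 * (2 * m + 1) * m.centralBinom := by
      exact_mod_cast Nat.succ_mul_centralBinom_succ m
    have hab := rationalIntegral_succ_middle hN a b
    have hba := rationalIntegral_succ_middle hN b a
    have hnext := ih (a + 1)
    refine mul_left_cancel₀ (a := (b : ℝ) + 1) (by positivity) ?_
    rw [pow_succ] at hnext ⊢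
    linear_combination ((4 * (N - 1)) ^ a * rationalIntegral N a (b + 1) (a + 1)) * hbinom b
      + 2 * (b.centralBinom * (4 * (N - 1)) ^ a) * hab
      + 2 * (a.centralBinom * (4 * (N - 1)) ^ b) * hba + ((a : ℝ) + 1) * hnext
      - 4 * (a - b) * ih a + (4 * (N - 1)) ^ b * rationalIntegral N b (a + 1) (b + 1) * hbinom a

-- On `[-1, 1]`, `t² (1 - t²) ≤ 1 / 4` and `1 / 4 ≤ (N - t²) / (4 (N - 1))`.
lemma rationalIntegral_self_le (hN : 1 < N) (n : ℕ) :
    rationalIntegral N n n (n + 1) ≤ rationalIntegral N 0 0 1 * (1 / (4 * (N - 1))) ^ n := by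
  simp only [rationalIntegral]
  rw [← intervalIntegral.integral_mul_const]
  refine intervalIntegral.integral_mono_on (by norm_num)
    (intervalIntegrable_rationalIntegral hN n n (n + 1))
    ((intervalIntegrable_rationalIntegral hN 0 0 1).mul_const _) fun t ht => ?_
  rw [← uIcc_of_le (by norm_num)] at ht
  have hw := sub_sq_pos hN ht
  have hv := sq_le_one_of_mem_uIcc ht
  have hN0 : 0 < N - 1 := by linarith
  have hbase : t ^ 2 * (1 - t ^ 2) / (N - t ^ 2) ≤ 1 / (4 * (N - 1)) := by
    rw [div_le_div_iff₀ hw (by positivity)]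
    nlinarith [mul_nonneg hN0.le (sq_nonneg (2 * t ^ 2 - 1))]
  calc t ^ (2 * n) * (1 - t ^ 2) ^ n / (N - t ^ 2) ^ (n + 1)
      = 1 / (N - t ^ 2) * (t ^ 2 * (1 - t ^ 2) / (N - t ^ 2)) ^ n := by
        rw [pow_mul, div_pow, mul_pow]
        field_simp
        ring
    _ ≤ 1 / (N - t ^ 2) * (1 / (4 * (N - 1))) ^ n := by
        have : 0 ≤ t ^ 2 * (1 - t ^ 2) / (N - t ^ 2) :=
          div_nonneg (mul_nonneg (sq_nonneg t) (by linarith)) hw.le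
        gcongr
    _ = _ := by simp

lemma sqrt_mul_log_eq_neg_mul_rationalIntegral (hN : 1 < N) :
    √N * log ((√N - 1) / (√N + 1)) = -N * rationalIntegral N 0 0 1 := by
  have hsq : √N ^ 2 = N := sq_sqrt (by linarith)
  have hsqrt : 1 < √N := by rwa [lt_sqrt zero_le_one, one_pow]
  have hderiv (t : ℝ) (ht : t ∈ uIcc (-1 : ℝ) 1) :
      HasDerivAt (fun t : ℝ => log (√N + t) - log (√N - t))
        (2 * √N * (t ^ (2 * 0) * (1 - t ^ 2) ^ 0 / (N - t ^ 2) ^ 1)) t := by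
    have hw := (sub_sq_pos hN ht).ne'
    rw [uIcc_of_le (by norm_num)] at ht
    have hplus : √N + t ≠ 0 := by linarith [ht.1]
    have hminus : √N - t ≠ 0 := by linarith [ht.2]
    refine ((((hasDerivAt_id t).const_add √N).log hplus).sub
      (((hasDerivAt_id t).const_sub √N).log hminus)).congr_deriv ?_
    have hfactor : N - t ^ 2 = (√N + t) * (√N - t) := by linear_combination -hsq
    rw [hfactor]
    simp only [id]
    field_simp
    ring
  have h := intervalIntegral.integral_eq_sub_of_hasDerivAt hderiv
    ((intervalIntegrable_rationalIntegral hN 0 0 1).const_mul _)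
  rw [intervalIntegral.integral_const_mul, ← rationalIntegral.eq_def, ← sub_eq_add_neg,
    sub_neg_eq_add] at h
  rw [log_div (by linarith) (by linarith)]
  linear_combination (√N / 2) * h - rationalIntegral N 0 0 1 * hsq

end RationalIntegral

section IntegerForm

/-- `x` is an integer linear form `P + Q κ` in `1` and `κ` whose coefficient satisfies
`|Q| ≤ β`. -/
def IsIntegerForm (κ β x : ℝ) : Prop := ∃ P Q : ℤ, x = P + Q * κ ∧ |(Q : ℝ)| ≤ β

variable {κ β x : ℝ}

lemma IsIntegerForm.int_mul (h : IsIntegerForm κ β x) (n : ℤ) :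
    IsIntegerForm κ (|(n : ℝ)| * β) (n * x) := by
  obtain ⟨P, Q, rfl, hQ⟩ := h
  refine ⟨n * P, n * Q, by push_cast; ring, ?_⟩
  rw [Int.cast_mul, abs_mul]
  gcongr

lemma IsIntegerForm.sum {ι : Type*} {s : Finset ι} {β x : ι → ℝ}
    (h : ∀ i ∈ s, IsIntegerForm κ (β i) (x i)) :
    IsIntegerForm κ (∑ i ∈ s, β i) (∑ i ∈ s, x i) := by
  choose! P Q hx hQ using h
  refine ⟨∑ i ∈ s, P i, ∑ i ∈ s, Q i, ?_, ?_⟩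
  · rw [Int.cast_sum, Int.cast_sum, Finset.sum_mul, ← Finset.sum_add_distrib]
    exact Finset.sum_congr rfl hx
  · rw [Int.cast_sum]
    exact (Finset.abs_sum_le_sum_abs _ _).trans (Finset.sum_le_sum hQ)

lemma eq_zero_of_intCast_add_mul_eq_zero (hκ : Irrational κ) {P Q : ℤ}
    (h : (P : ℝ) + Q * κ = 0) : P = 0 ∧ Q = 0 := by
  have hQ : Q = 0 := by
    by_contra hQ
    refine (hκ.intCast_mul hQ).ne_int (-P) ?_
    push_cast
    linarith
  subst hQ
  simpa using h

lemma dvd_and_dvd_of_coprime_mul_eq (hκ : Irrational κ) {d A B : ℕ} {P Q P' Q' : ℤ}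
    (hA : d.Coprime A) (hB : d ∣ B) (h : A * (P + Q * κ) = B * (P' + Q' * κ)) :
    (d : ℤ) ∣ P ∧ (d : ℤ) ∣ Q := by
  have hzero : ((A * P - B * P' : ℤ) : ℝ) + (A * Q - B * Q' : ℤ) * κ = 0 := by
    push_cast
    linear_combination h
  have hdvd {y z : ℤ} (hyz : A * y - B * z = 0) : (d : ℤ) ∣ y := by
    refine (Nat.isCoprime_iff_coprime.2 hA).dvd_of_dvd_mul_left ?_
    rw [sub_eq_zero.1 hyz]
    exact (Int.natCast_dvd_natCast.2 hB).mul_right z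
  obtain ⟨hP, hQ⟩ := eq_zero_of_intCast_add_mul_eq_zero hκ hzero
  exact ⟨hdvd hP, hdvd hQ⟩

lemma dvd_lcmUpto {j M : ℕ} (hj : 0 < j) (hjM : j ≤ M) : j ∣ Nat.lcmUpto M :=
  Finset.dvd_lcm (f := id) (Finset.mem_Icc.2 ⟨hj, hjM⟩)

lemma mul_choose_dvd {D : ℕ} (k r : ℕ) (hk : 0 < k)
    (hD : ∀ j, k ≤ j → j ≤ k + r → j ∣ D) : k * (k + r).choose k ∣ D := by
  induction r generalizing k with
  | zero => simpa using hD k le_rfl le_rfl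
  | succ r ih =>
    obtain ⟨x, hx⟩ := ih k hk fun j h₁ h₂ => hD j h₁ (by omega)
    obtain ⟨y, hy⟩ := ih (k + 1) k.succ_pos fun j h₁ h₂ => hD j (by omega) (by omega)
    have hsucc := Nat.add_one_mul_choose_eq (k + r) k
    have hchoose := Nat.choose_mul_succ_eq (k + r) k
    rw [show k + 1 + r = k + r + 1 by ring] at hy
    rw [show k + r + 1 - k = r + 1 by omega] at hchoose
    zify at hx hy hsucc hchoose
    rw [← Int.natCast_dvd_natCast]
    refine ⟨x - y, mul_right_cancel₀ (b := (r : ℤ) + 1) (by omega) ?_⟩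
    rw [← add_assoc k r 1]
    push_cast
    linear_combination (k : ℤ) * (x - y) * hchoose + ((k : ℤ) + r + 1) * hx - (k : ℤ) * hy
      + k * y * hsucc

end IntegerForm

section Arithmetic

variable {k : ℕ}

lemma one_lt_two_mul_add_one (hk : 0 < k) : (1 : ℝ) < 2 * k + 1 := by
  have : (0 : ℝ) < k := Nat.cast_pos.2 hk
  linarith

lemma exists_lcmUpto_mul_rationalIntegral_eq (hk : 0 < k) {m M : ℕ} (hm : 2 * m ≤ M) :
    ∃ P : ℤ, (4 * k * (2 * k + 1)) ^ m * Nat.lcmUpto M * rationalIntegral (2 * k + 1) 0 0 (m + 1)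
      = m.centralBinom * (P + k ^ m * Nat.lcmUpto M * rationalIntegral (2 * k + 1) 0 0 1) := by
  induction m with
  | zero => exact ⟨0, by simp⟩
  | succ m ih =>
    obtain ⟨P, hP⟩ := ih (by omega)
    obtain ⟨e, he⟩ := mul_choose_dvd (m + 1) (m + 1) m.succ_pos
      fun j h₁ h₂ => dvd_lcmUpto (M := M) (by omega) (by omega)
    rw [← two_mul (m + 1), ← Nat.centralBinom_eq_two_mul_choose] at he
    have he' : (Nat.lcmUpto M : ℝ) = (m + 1) * (m + 1).centralBinom * e := by exact_mod_cast he
    have hrec := rationalIntegral_zero_zero_succ (one_lt_two_mul_add_one hk) (m + 1)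
    have hbinom : ((m : ℝ) + 1) * (m + 1).centralBinom = 2 * (2 * m + 1) * m.centralBinom := by
      exact_mod_cast Nat.succ_mul_centralBinom_succ m
    have : (k : ℝ) ≠ 0 := Nat.cast_ne_zero.2 hk.ne'
    have hboundary : (4 * k * (2 * k + 1) : ℝ) ^ (m + 1) * (2 / (2 * k + 1 - 1) ^ (m + 1))
        = 2 * (2 * (2 * k + 1)) ^ (m + 1) := by
      rw [add_sub_cancel_right, show (4 * k * (2 * k + 1) : ℝ) = 2 * (2 * k + 1) * (2 * k) by ring,
        mul_pow]
      field_simp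
    refine ⟨k * P + 2 * (2 * (2 * k + 1)) ^ m * e, ?_⟩
    refine mul_left_cancel₀ (a := 2 * (2 * k + 1) * ((m : ℝ) + 1)) (by positivity) ?_
    push_cast at hrec ⊢
    linear_combination (4 * k * (2 * k + 1)) ^ (m + 1) * Nat.lcmUpto M * hrec
      + Nat.lcmUpto M * hboundary + (2 * m + 1) * (4 * k * (2 * k + 1)) * hP
      - 2 * k * (2 * k + 1) * (P + k ^ m * Nat.lcmUpto M * rationalIntegral (2 * k + 1) 0 0 1)
        * hbinom
      + 2 * (2 * (2 * k + 1)) ^ (m + 1) * he'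

lemma exists_lcmUpto_mul_integral_eq_intCast (k : ℕ) {r M : ℕ} (hr : 2 * r + 1 ≤ M) :
    ∃ P : ℤ, (Nat.lcmUpto M : ℝ) * ∫ t in (-1 : ℝ)..1, (2 * k + 1 - t ^ 2) ^ r = P := by
  have hexpand (t : ℝ) : (2 * k + 1 - t ^ 2) ^ r = ∑ j ∈ Finset.range (r + 1),
      (-1) ^ j * (2 * k + 1) ^ (r - j) * r.choose j * t ^ (2 * j) := by
    rw [sub_eq_neg_add, add_pow]
    refine Finset.sum_congr rfl fun j _ => ?_
    rw [neg_pow, pow_mul]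
    ring
  have hterm (j : ℕ) (hj : j ∈ Finset.range (r + 1)) : ∃ P : ℤ, (Nat.lcmUpto M : ℝ) *
      ∫ t in (-1 : ℝ)..1, (-1) ^ j * (2 * k + 1) ^ (r - j) * r.choose j * t ^ (2 * j) = P := by
    rw [Finset.mem_range] at hj
    obtain ⟨x, hx⟩ := dvd_lcmUpto (j := 2 * j + 1) (M := M) (by omega) (by omega)
    refine ⟨(-1) ^ j * (2 * k + 1) ^ (r - j) * r.choose j * (2 * x), ?_⟩
    rw [intervalIntegral.integral_const_mul, integral_pow, hx,
      Odd.neg_one_pow ⟨j, rfl⟩]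
    push_cast
    field_simp
    ring
  choose! P hP using hterm
  refine ⟨∑ j ∈ Finset.range (r + 1), P j, ?_⟩
  simp only [hexpand]
  rw [intervalIntegral.integral_finsetSum
    fun i _ => Continuous.intervalIntegrable (by fun_prop) _ _, Finset.mul_sum, Int.cast_sum]
  exact Finset.sum_congr rfl hP

lemma integral_pow_div_pow_of_le {N : ℝ} (hN : 1 < N) {c s : ℕ} (h : s ≤ c) :
    ∫ t in (-1 : ℝ)..1, (N - t ^ 2) ^ s / (N - t ^ 2) ^ (c + 1)
      = rationalIntegral N 0 0 (c - s + 1) := by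
  refine intervalIntegral.integral_congr fun t ht => ?_
  have hw := (sub_sq_pos hN ht).ne'
  simp only [mul_zero, pow_zero, one_mul]
  rw [show c + 1 = s + (c - s + 1) by omega, pow_add, ← div_div, div_self (pow_ne_zero _ hw)]

lemma integral_pow_div_pow_of_lt {N : ℝ} (hN : 1 < N) {c s : ℕ} (h : c < s) :
    ∫ t in (-1 : ℝ)..1, (N - t ^ 2) ^ s / (N - t ^ 2) ^ (c + 1)
      = ∫ t in (-1 : ℝ)..1, (N - t ^ 2) ^ (s - c - 1) := by
  refine intervalIntegral.integral_congr fun t ht => ?_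
  have hw := (sub_sq_pos hN ht).ne'
  rw [div_eq_iff (pow_ne_zero _ hw), ← pow_add]
  congr 1
  omega

lemma isIntegerForm_integral_pow_div_pow (hk : 0 < k) {c s M e : ℕ} {ρ : ℝ}
    (he : (4 * k * (2 * k + 1)) ^ (c - s) ∣ e) (hc : 2 * c ≤ M) (hs : 2 * s ≤ M + 2 * c)
    (hρ : 0 < ρ) (hρk : ρ ≤ 2 * k + 1) :
    IsIntegerForm (rationalIntegral (2 * k + 1) 0 0 1) (e * Nat.lcmUpto M * (ρ ^ s / ρ ^ c))
      (e * Nat.lcmUpto M *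
        ∫ t in (-1 : ℝ)..1, (2 * k + 1 - t ^ 2) ^ s / (2 * k + 1 - t ^ 2) ^ (c + 1)) := by
  have hN := one_lt_two_mul_add_one hk
  rcases le_or_gt s c with hsc | hsc
  · obtain ⟨e, rfl⟩ := he
    obtain ⟨m, rfl⟩ := Nat.exists_eq_add_of_le hsc
    rw [integral_pow_div_pow_of_le hN hsc, Nat.add_sub_cancel_left]
    obtain ⟨P, hP⟩ := exists_lcmUpto_mul_rationalIntegral_eq hk (m := m) (M := M) (by omega)
    refine ⟨e * m.centralBinom * P, e * m.centralBinom * k ^ m * Nat.lcmUpto M, ?_, ?_⟩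
    · push_cast
      linear_combination e * hP
    · push_cast
      rw [abs_of_nonneg (by positivity), pow_add, ← div_div, div_self (by positivity)]
      have hbinom : (m.centralBinom : ℝ) ≤ 4 ^ m := by
        exact_mod_cast Nat.centralBinom_le_four_pow m
      calc (e * m.centralBinom * k ^ m * Nat.lcmUpto M : ℝ)
          ≤ e * 4 ^ m * k ^ m * Nat.lcmUpto M := by gcongr
        _ = (4 * k * (2 * k + 1)) ^ m * e * Nat.lcmUpto M * (1 / (2 * k + 1) ^ m) := by
          rw [mul_pow, mul_pow]
          field_simp
        _ ≤ (4 * k * (2 * k + 1)) ^ m * e * Nat.lcmUpto M * (1 / ρ ^ m) := by gcongr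
  · rw [integral_pow_div_pow_of_lt hN hsc]
    obtain ⟨P, hP⟩ :=
      exists_lcmUpto_mul_integral_eq_intCast k (r := s - c - 1) (M := M) (by omega)
    refine ⟨e * P, 0, ?_, ?_⟩
    · push_cast
      linear_combination e * hP
    · rw [Int.cast_zero, abs_zero]
      positivity

lemma rationalIntegral_eq_sum {N : ℝ} (hN : 1 < N) (a b c : ℕ) :
    rationalIntegral N a b (c + 1) = ∑ l ∈ Finset.range (a + 1), ∑ i ∈ Finset.range (b + 1),
      (-1) ^ l * a.choose l * N ^ (a - l) * b.choose i * (1 - N) ^ (b - i) *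
        ∫ t in (-1 : ℝ)..1, (N - t ^ 2) ^ (i + l) / (N - t ^ 2) ^ (c + 1) := by
  have hexpand (t : ℝ) : t ^ (2 * a) * (1 - t ^ 2) ^ b / (N - t ^ 2) ^ (c + 1) =
      ∑ l ∈ Finset.range (a + 1), ∑ i ∈ Finset.range (b + 1),
        (-1) ^ l * a.choose l * N ^ (a - l) * b.choose i * (1 - N) ^ (b - i) *
          ((N - t ^ 2) ^ (i + l) / (N - t ^ 2) ^ (c + 1)) := by
    rw [pow_mul, show t ^ 2 = -(N - t ^ 2) + N by ring, add_pow,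
      show 1 - (-(N - t ^ 2) + N) = (N - t ^ 2) + (1 - N) by ring, add_pow, Finset.sum_mul_sum]
    simp only [Finset.sum_div]
    refine Finset.sum_congr rfl fun l _ => Finset.sum_congr rfl fun i _ => ?_
    rw [neg_pow (N - t ^ 2), show N - (-(N - t ^ 2) + N) = N - t ^ 2 by ring]
    ring
  have hint (l i : ℕ) := (intervalIntegrable_div_sub_sq_pow hN
    (p := fun t => (N - t ^ 2) ^ (i + l)) (by fun_prop) (c + 1)).const_mul
    ((-1) ^ l * a.choose l * N ^ (a - l) * b.choose i * (1 - N) ^ (b - i))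
  simp only [rationalIntegral, hexpand]
  rw [intervalIntegral.integral_finsetSum]
  · refine Finset.sum_congr rfl fun l _ => ?_
    rw [intervalIntegral.integral_finsetSum fun i _ => hint l i]
    simp only [intervalIntegral.integral_const_mul]
  · intro l _
    simpa only [Finset.sum_fn] using IntervalIntegrable.sum (Finset.range (b + 1))
      fun i _ => hint l i

theorem isIntegerForm_mul_rationalIntegral (hk : 0 < k) {a b c M E : ℕ} {ρ : ℝ}
    (hE : ∀ l ≤ a, ∀ i ≤ b,
      (4 * k * (2 * k + 1)) ^ (c - (i + l)) ∣ E * (2 * k + 1) ^ (a - l) * (2 * k) ^ (b - i))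
    (hc : 2 * c ≤ M) (hab : 2 * (a + b) ≤ M + 2 * c) (hρ : 0 < ρ) (hρk : ρ ≤ 2 * k + 1) :
    IsIntegerForm (rationalIntegral (2 * k + 1) 0 0 1)
      (E * Nat.lcmUpto M * ((2 * k + 1 + ρ) ^ a * (2 * k + ρ) ^ b / ρ ^ c))
      (E * Nat.lcmUpto M * rationalIntegral (2 * k + 1) a b (c + 1)) := by
  have hbound : E * Nat.lcmUpto M * ((2 * k + 1 + ρ) ^ a * (2 * k + ρ) ^ b / ρ ^ c)
      = ∑ l ∈ Finset.range (a + 1), ∑ i ∈ Finset.range (b + 1),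
        |(((-1) ^ l * (-1) ^ (b - i) * a.choose l * b.choose i : ℤ) : ℝ)| *
          ((E * (2 * k + 1) ^ (a - l) * (2 * k) ^ (b - i) : ℕ) * Nat.lcmUpto M *
            (ρ ^ (i + l) / ρ ^ c)) := by
    rw [add_comm _ ρ, add_comm _ ρ, add_pow, add_pow, Finset.sum_mul_sum]
    simp only [Finset.sum_div, Finset.mul_sum]
    refine Finset.sum_congr rfl fun l _ => Finset.sum_congr rfl fun i _ => ?_
    push_cast
    simp only [abs_mul, abs_pow, abs_neg, abs_one, one_pow, Nat.abs_cast]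
    ring
  have hform : E * Nat.lcmUpto M * rationalIntegral (2 * k + 1) a b (c + 1)
      = ∑ l ∈ Finset.range (a + 1), ∑ i ∈ Finset.range (b + 1),
        (((-1) ^ l * (-1) ^ (b - i) * a.choose l * b.choose i : ℤ) : ℝ) *
          ((E * (2 * k + 1) ^ (a - l) * (2 * k) ^ (b - i) : ℕ) * Nat.lcmUpto M *
            ∫ t in (-1 : ℝ)..1,
              (2 * k + 1 - t ^ 2) ^ (i + l) / (2 * k + 1 - t ^ 2) ^ (c + 1)) := by
    rw [rationalIntegral_eq_sum (one_lt_two_mul_add_one hk)]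
    simp only [Finset.mul_sum]
    refine Finset.sum_congr rfl fun l _ => Finset.sum_congr rfl fun i _ => ?_
    rw [show (1 - (2 * k + 1) : ℝ) = -(2 * k) by ring, neg_pow (2 * k : ℝ)]
    push_cast
    ring
  rw [hbound, hform]
  refine IsIntegerForm.sum fun l hl => IsIntegerForm.sum fun i hi => ?_
  rw [Finset.mem_range_succ_iff] at hl hi
  exact (isIntegerForm_integral_pow_div_pow hk (hE l hl i hi) hc (by omega) hρ hρk).int_mul _

lemma isIntegerForm_two_pow_mul_rationalIntegral (hk : 0 < k) {a b : ℕ} {ρ : ℝ} (hab : a ≤ b)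
    (hba : b ≤ 2 * a) (hρ : 0 < ρ) (hρk : ρ ≤ 2 * k + 1) :
    IsIntegerForm (rationalIntegral (2 * k + 1) 0 0 1)
      (2 ^ (2 * a - b) * Nat.lcmUpto (2 * b) *
        ((2 * k + 1 + ρ) ^ a * (2 * k + ρ) ^ b / ρ ^ a))
      (2 ^ (2 * a - b) * Nat.lcmUpto (2 * b) * rationalIntegral (2 * k + 1) a b (a + 1)) := by
  have hdvd (l : ℕ) (hl : l ≤ a) (i : ℕ) (hi : i ≤ b) : (4 * k * (2 * k + 1)) ^ (a - (i + l)) ∣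
      2 ^ (2 * a - b) * (2 * k + 1) ^ (a - l) * (2 * k) ^ (b - i) := by
    have hleft : (4 * k * (2 * k + 1)) ^ (a - (i + l))
        = 2 ^ (2 * (a - (i + l))) * k ^ (a - (i + l)) * (2 * k + 1) ^ (a - (i + l)) := by
      rw [pow_mul, ← mul_pow, ← mul_pow]
      norm_num
    have hright : 2 ^ (2 * a - b) * (2 * k + 1) ^ (a - l) * (2 * k) ^ (b - i)
        = 2 ^ (2 * a - i) * k ^ (b - i) * (2 * k + 1) ^ (a - l) := by
      rw [mul_pow 2 k, show 2 * a - i = 2 * a - b + (b - i) by omega, pow_add]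
      ring
    rw [hleft, hright]
    gcongr ?_ * ?_ * ?_ <;> exact pow_dvd_pow _ (by omega)
  exact_mod_cast isIntegerForm_mul_rationalIntegral hk hdvd (M := 2 * b) (by omega) (by omega)
    hρ hρk

lemma two_pow_mul_lcmUpto_mul_rationalIntegral_le (hk : 0 < k) (n : ℕ) :
    2 ^ n * Nat.lcmUpto (2 * n) * rationalIntegral (2 * k + 1) n n (n + 1)
      ≤ rationalIntegral (2 * k + 1) 0 0 1
        * exp (n * (Chebyshev.psi (2 * n) / n - log (4 * k))) := by
  have : (0 : ℝ) < k := Nat.cast_pos.2 hk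
  have hlcm : (Nat.lcmUpto (2 * n) : ℝ) = exp (Chebyshev.psi (2 * n)) := by
    have h := Chebyshev.psi_eq_log_lcmUpto (2 * n)
    push_cast at h
    rw [h, exp_log (Nat.cast_pos.2 (Nat.lcmUpto_pos _))]
  have hpsi : (n : ℝ) * (Chebyshev.psi (2 * n) / n) = Chebyshev.psi (2 * n) :=
    mul_div_cancel_of_imp' fun hn => by simp [hn]
  rw [mul_sub, hpsi, exp_sub, exp_nat_mul, exp_log (by positivity), ← hlcm]
  calc (2 ^ n * Nat.lcmUpto (2 * n) * rationalIntegral (2 * k + 1) n n (n + 1) : ℝ)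
      ≤ 2 ^ n * Nat.lcmUpto (2 * n) * (rationalIntegral (2 * k + 1) 0 0 1
          * (1 / (4 * (2 * k + 1 - 1))) ^ n) := by
        gcongr
        exact rationalIntegral_self_le (one_lt_two_mul_add_one hk) n
    _ = rationalIntegral (2 * k + 1) 0 0 1 * (Nat.lcmUpto (2 * n) / (4 * k) ^ n) := by
        rw [show (1 / (4 * (2 * k + 1 - 1)) : ℝ) = 1 / (2 * (4 * k)) by ring, div_pow, one_pow,
          mul_pow 2]
        field_simp

theorem irrational_rationalIntegral (hk : 2 ≤ k) :
    Irrational (rationalIntegral (2 * k + 1) 0 0 1) := by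
  have hk0 : 0 < k := by omega
  have hN := one_lt_two_mul_add_one hk0
  set κ := rationalIntegral (2 * k + 1) 0 0 1
  have hlog : 2 - log (4 * k) < 0 := by
    have h8 : log (2 ^ 3) ≤ log (4 * k) :=
      log_le_log (by norm_num) (by norm_num; exact_mod_cast (by omega : 8 ≤ 4 * k))
    rw [log_pow] at h8
    push_cast at h8
    linarith [log_two_gt_d9]
  have hlim : Tendsto (fun n : ℕ => κ * exp (n * (Chebyshev.psi (2 * n) / n - log (4 * k)))) atTop
      (𝓝 0) := by
    have hexponent := tendsto_natCast_atTop_atTop.atTop_mul_neg hlog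
      ((tendsto_const_mul_natCast_div tendsto_psi_div two_pos).sub_const (log (4 * k)))
    simpa using (tendsto_exp_atBot.comp hexponent).const_mul κ
  refine irrational_of_forall_exists_int_add_mul fun ε hε => ?_
  obtain ⟨n, hn⟩ := (hlim.eventually_lt_const hε).exists
  obtain ⟨P, Q, hform, -⟩ :=
    isIntegerForm_two_pow_mul_rationalIntegral hk0 (le_refl n) (by omega) one_pos hN.le
  rw [show 2 * n - n = n by omega] at hform
  have hpos : 0 < P + Q * κ := by
    rw [← hform]
    have := rationalIntegral_pos hN n n (n + 1)
    have := Nat.lcmUpto_pos (2 * n)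
    positivity
  refine ⟨P, Q, abs_pos.2 hpos.ne', ?_⟩
  rw [abs_of_pos hpos, ← hform]
  exact (two_pow_mul_lcmUpto_mul_rationalIntegral_le hk0 n).trans_lt hn

-- The symmetry `centralBinom_mul_rationalIntegral_comm` writes the form for `(a, b)` as a multiple
-- of `a.centralBinom`; by irrationality this can be read off both of its coefficients.
theorem isIntegerForm_div_mul_rationalIntegral (hk : 2 ≤ k) {a b Φ : ℕ} {ρ : ℝ} (hab : a ≤ b)
    (hba : b ≤ 2 * a) (hΦ : Φ ∣ a.centralBinom)
    (hcop : Φ.Coprime (b.centralBinom * (2 * k * (2 * k + 1)))) (hρ : 0 < ρ)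
    (hρk : ρ ≤ 2 * k + 1) :
    IsIntegerForm (rationalIntegral (2 * k + 1) 0 0 1)
      (2 ^ (2 * a - b) * (Nat.lcmUpto (2 * b) / Φ) *
        ((2 * k + 1 + ρ) ^ a * (2 * k + ρ) ^ b / ρ ^ a))
      (2 ^ (2 * a - b) * (Nat.lcmUpto (2 * b) / Φ) *
        rationalIntegral (2 * k + 1) a b (a + 1)) := by
  have hk0 : 0 < k := by omega
  obtain ⟨P, Q, hx, hQ⟩ := isIntegerForm_two_pow_mul_rationalIntegral hk0 hab hba hρ hρk
  obtain ⟨P', Q', hx', -⟩ := isIntegerForm_mul_rationalIntegral (a := b) (b := a) (c := b)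
    (M := 2 * b) (E := (4 * k * (2 * k + 1)) ^ b) hk0
    (fun l _ i _ => ((pow_dvd_pow _ (by omega)).mul_right _).mul_right _) le_rfl (by omega) hρ hρk
  have hsymm := centralBinom_mul_rationalIntegral_comm (one_lt_two_mul_add_one hk0) a b
  have hcoprime : Φ.Coprime (b.centralBinom * (8 * k) ^ a * (4 * k * (2 * k + 1)) ^ b) := by
    obtain ⟨hb, hcop⟩ := Nat.coprime_mul_iff_right.1 hcop
    obtain ⟨h2k, hN⟩ := Nat.coprime_mul_iff_right.1 hcop
    obtain ⟨h2, -⟩ := Nat.coprime_mul_iff_right.1 h2k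
    rw [show 8 * k = 2 * 2 * (2 * k) by ring, show 4 * k = 2 * (2 * k) by ring]
    exact (hb.mul_right (((h2.mul_right h2).mul_right h2k).pow_right a)).mul_right
      (((h2.mul_right h2k).mul_right hN).pow_right b)
  obtain ⟨⟨P₁, rfl⟩, ⟨Q₁, rfl⟩⟩ := dvd_and_dvd_of_coprime_mul_eq
    (P := P) (Q := Q) (P' := P') (Q' := Q') (irrational_rationalIntegral hk) hcoprime
    (hΦ.mul_right ((8 * k) ^ b * 2 ^ (2 * a - b))) (by
      push_cast at hx' ⊢
      rw [← hx, ← hx']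
      linear_combination
        (2 ^ (2 * a - b) * Nat.lcmUpto (2 * b) * (4 * k * (2 * k + 1)) ^ b) * hsymm)
  have hΦ0 : (0 : ℝ) < Φ := Nat.cast_pos.2 (Nat.pos_of_dvd_of_pos hΦ a.centralBinom_pos)
  refine ⟨P₁, Q₁, ?_, ?_⟩
  · push_cast at hx
    field_simp
    linear_combination hx
  · rw [Int.cast_mul, abs_mul, Int.cast_natCast, Nat.abs_cast] at hQ
    exact ((le_div_iff₀' hΦ0).2 hQ).trans_eq (by ring)

end Arithmetic

section Primes

variable {k n p : ℕ}

lemma prime_dvd_centralBinom_iff (hp : p.Prime) (hk : 2 * k < p ^ 2) :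
    p ∣ k.centralBinom ↔ p ≤ 2 * (k % p) := by
  have hcarry := Nat.factorization_choose (p := p) (n := 2 * k) (k := k) (b := 2) hp (by lia)
    (Nat.log_lt_of_lt_pow' (by norm_num) hk)
  simp only [show Finset.Ico 1 2 = {1} from rfl, show 2 * k - k = k by lia,
    Finset.filter_singleton, pow_one, ← two_mul] at hcarry
  rw [Nat.centralBinom, hp.dvd_iff_one_le_factorization (Nat.choose_pos (by lia)).ne', hcarry]
  split_ifs with h <;> simp [h]

lemma prime_dvd_centralBinom_iff_of_quotient (hp : p.Prime) (hk : 2 * k < p ^ 2) {j : ℕ}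
    (hj : j * p ≤ k) (hj' : k < (j + 1) * p) : p ∣ k.centralBinom ↔ (2 * j + 1) * p ≤ 2 * k := by
  have hmod : p * j + k % p = k := by
    rw [← Nat.div_eq_of_lt_le hj hj', Nat.div_add_mod]
  rw [prime_dvd_centralBinom_iff hp hk]
  constructor <;> intro h <;> nlinarith

/-- The primes that are cancelled from the linear forms: for `12 ≤ n` they divide
`(5 * n).centralBinom` but not `(6 * n).centralBinom`. The three intervals correspond to the values
`0`, `1`, `2` of the quotient `5 * n / p`. -/
def cancelledPrimes (n : ℕ) : Finset ℕ :=
  (Finset.Ioc (5 * n) (6 * n) ∪ Finset.Ioc (5 * n / 2) (3 * n) ∪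
    Finset.Ioc (12 * n / 7) (2 * n)).filter Nat.Prime

lemma prime_of_mem_cancelledPrimes (hp : p ∈ cancelledPrimes n) : p.Prime :=
  (Finset.mem_filter.1 hp).2

lemma lt_of_mem_cancelledPrimes (hp : p ∈ cancelledPrimes n) : 12 * n < 7 * p := by
  simp only [cancelledPrimes, Finset.mem_filter, Finset.mem_union, Finset.mem_Ioc] at hp
  lia

lemma dvd_and_not_dvd_of_mem_cancelledPrimes (hn : 12 ≤ n) (hp : p ∈ cancelledPrimes n) :
    p ∣ (5 * n).centralBinom ∧ ¬ p ∣ (6 * n).centralBinom := by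
  have hprime := prime_of_mem_cancelledPrimes hp
  have hlt := lt_of_mem_cancelledPrimes hp
  have hsq : 12 * n < p ^ 2 := by nlinarith
  simp only [cancelledPrimes, Finset.mem_filter, Finset.mem_union, Finset.mem_Ioc] at hp
  obtain ⟨j, hj, hj', hdvd, hi, hi', hndvd⟩ : ∃ j, j * p ≤ 5 * n ∧ 5 * n < (j + 1) * p ∧
      (2 * j + 1) * p ≤ 2 * (5 * n) ∧ (j + 1) * p ≤ 6 * n ∧ 6 * n < (j + 1 + 1) * p ∧
      ¬ (2 * (j + 1) + 1) * p ≤ 2 * (6 * n) := by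
    rcases hp with ⟨(h | h) | h, -⟩
    · exact ⟨0, by lia⟩
    · exact ⟨1, by lia⟩
    · exact ⟨2, by lia⟩
  exact ⟨(prime_dvd_centralBinom_iff_of_quotient hprime (by lia) hj hj').2 hdvd,
    (prime_dvd_centralBinom_iff_of_quotient hprime (by lia) hi hi').not.2 hndvd⟩

lemma prod_cancelledPrimes_dvd (hn : 12 ≤ n) :
    ∏ p ∈ cancelledPrimes n, p ∣ (5 * n).centralBinom :=
  Finset.prod_primes_dvd _ (fun _ hp => (prime_of_mem_cancelledPrimes hp).prime)
    fun _ hp => (dvd_and_not_dvd_of_mem_cancelledPrimes hn hp).1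

lemma coprime_prod_cancelledPrimes (hn : 12 ≤ n) :
    (∏ p ∈ cancelledPrimes n, p).Coprime ((6 * n).centralBinom * (2 * 9 * (2 * 9 + 1))) := by
  refine Nat.Coprime.prod_left fun p hp => ?_
  have hprime := prime_of_mem_cancelledPrimes hp
  have hlt := lt_of_mem_cancelledPrimes hp
  refine Nat.Coprime.mul_right
    (hprime.coprime_iff_not_dvd.2 (dvd_and_not_dvd_of_mem_cancelledPrimes hn hp).2)
    (Nat.Coprime.mul_right ?_ ?_)
  · exact Nat.coprime_of_lt_prime (by norm_num) (by lia) hprime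
  · exact Nat.coprime_of_lt_prime (by norm_num) (by lia) hprime

lemma prod_cancelledPrimes_pos (n : ℕ) : 0 < ∏ p ∈ cancelledPrimes n, p :=
  Finset.prod_pos fun _ hp => (prime_of_mem_cancelledPrimes hp).pos

lemma sum_log_primes_Ioc_floor {a b : ℝ} (hab : a ≤ b) :
    ∑ p ∈ Finset.Ioc ⌊a⌋₊ ⌊b⌋₊ with p.Prime, log p = Chebyshev.theta b - Chebyshev.theta a := by
  rw [Chebyshev.theta, Chebyshev.theta, ← Finset.Ioc_union_Ioc_eq_Ioc (Nat.zero_le ⌊a⌋₊)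
    (Nat.floor_mono hab), Finset.filter_union, Finset.sum_union, add_sub_cancel_left]
  exact Finset.disjoint_filter_filter (Finset.Ioc_disjoint_Ioc_of_le le_rfl)

lemma log_prod_cancelledPrimes (n : ℕ) :
    log (∏ p ∈ cancelledPrimes n, p : ℕ)
      = (Chebyshev.theta (6 * n) - Chebyshev.theta (5 * n))
        + (Chebyshev.theta (3 * n) - Chebyshev.theta (5 / 2 * n))
        + (Chebyshev.theta (2 * n) - Chebyshev.theta (12 / 7 * n)) := by
  have : (0 : ℝ) ≤ n := n.cast_nonneg
  have hfloor (c : ℕ) (d : ℕ) : ⌊(c / d : ℝ) * n⌋₊ = c * n / d := by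
    rw [div_mul_eq_mul_div, ← Nat.cast_mul, Nat.floor_div_eq_div]
  rw [← sum_log_primes_Ioc_floor (by linarith), ← sum_log_primes_Ioc_floor (by linarith),
    ← sum_log_primes_Ioc_floor (by linarith)]
  have h6 := hfloor 6 1
  have h5 := hfloor 5 1
  have h3 := hfloor 3 1
  have h52 := hfloor 5 2
  have h2 := hfloor 2 1
  have h127 := hfloor 12 7
  norm_num only [Nat.cast_ofNat, Nat.cast_one, div_one, Nat.div_one] at h6 h5 h3 h52 h2 h127
  rw [h6, h5, h3, h52, h2, h127, Nat.cast_prod, log_prod fun p hp =>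
    Nat.cast_ne_zero.2 (prime_of_mem_cancelledPrimes hp).ne_zero, cancelledPrimes,
    Finset.filter_union, Finset.filter_union, Finset.sum_union, Finset.sum_union]
  · exact Finset.disjoint_filter_filter (Finset.disjoint_left.2 fun p => by
      simp only [Finset.mem_Ioc]; lia)
  · rw [← Finset.filter_union]
    exact Finset.disjoint_filter_filter (Finset.disjoint_left.2 fun p => by
      simp only [Finset.mem_union, Finset.mem_Ioc]; lia)

lemma tendsto_psi_sub_log_prod_cancelledPrimes_div :
    Tendsto (fun n : ℕ => (Chebyshev.psi (12 * n) - log (∏ p ∈ cancelledPrimes n, p : ℕ)) / n)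
      atTop (𝓝 (143 / 14)) := by
  have hθ {c : ℝ} (hc : 0 < c) := tendsto_const_mul_natCast_div tendsto_theta_div hc
  have hψ := tendsto_const_mul_natCast_div tendsto_psi_div (c := 12) (by norm_num)
  have h := hψ.sub ((((hθ (c := 6) (by norm_num)).sub (hθ (c := 5) (by norm_num))).add
    ((hθ (c := 3) (by norm_num)).sub (hθ (c := 5 / 2) (by norm_num)))).add
    ((hθ (c := 2) (by norm_num)).sub (hθ (c := 12 / 7) (by norm_num))))
  norm_num only at h
  refine h.congr fun n => ?_
  rw [log_prod_cancelledPrimes]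
  ring

end Primes

section Asymptotics

lemma rationalIntegral_mul_mul_succ (N : ℝ) (a b c n : ℕ) :
    rationalIntegral N (a * n) (b * n) (c * n + 1)
      = ∫ t in (-1)..1, (N - t ^ 2)⁻¹ * (t ^ (2 * a) * (1 - t ^ 2) ^ b / (N - t ^ 2) ^ c) ^ n := by
  rw [rationalIntegral]
  congr 1 with t
  rw [div_pow, mul_pow, ← pow_mul, ← pow_mul, ← pow_mul, mul_assoc 2 a n, pow_succ _ (c * n),
    div_mul_eq_div_div, div_eq_inv_mul]

theorem exists_tendsto_log_rationalIntegral_div {N : ℝ} (hN : 1 < N) (a b c : ℕ) :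
    ∃ t ∈ Icc (-1 : ℝ) 1, 0 < t ^ (2 * a) * (1 - t ^ 2) ^ b / (N - t ^ 2) ^ c ∧
      Tendsto (fun n : ℕ => log (rationalIntegral N (a * n) (b * n) (c * n + 1)) / n) atTop
        (𝓝 (log (t ^ (2 * a) * (1 - t ^ 2) ^ b / (N - t ^ 2) ^ c))) := by
  set f : ℝ → ℝ := fun t => t ^ (2 * a) * (1 - t ^ 2) ^ b / (N - t ^ 2) ^ c
  have hw {t : ℝ} (ht : t ∈ Icc (-1 : ℝ) 1) : 0 < N - t ^ 2 :=
    sub_sq_pos hN (Icc_subset_uIcc ht)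
  have hf : ContinuousOn f (Icc (-1) 1) :=
    ContinuousOn.div (by fun_prop) (by fun_prop) fun t ht => pow_ne_zero _ (hw ht).ne'
  obtain ⟨t, ht, hmax⟩ := isCompact_Icc.exists_isMaxOn (nonempty_Icc.2 (by norm_num)) hf
  have hpos : 0 < f t := by
    have hhalf : (1 / 2 : ℝ) ∈ Icc (-1 : ℝ) 1 := by constructor <;> norm_num
    refine lt_of_lt_of_le ?_ (hmax hhalf)
    have : (0 : ℝ) < 1 - (1 / 2) ^ 2 := by norm_num
    have h₂ := hw hhalf
    positivity
  have hf0 (t : ℝ) (ht : t ∈ Icc (-1 : ℝ) 1) : 0 ≤ f t := by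
    have h₁ : 0 ≤ 1 - t ^ 2 := sub_nonneg.2 (sq_le_one_of_mem_uIcc (Icc_subset_uIcc ht))
    have h₂ := hw ht
    simp only [f, pow_mul]
    positivity
  refine ⟨t, ht, hpos, ?_⟩
  simp only [rationalIntegral_mul_mul_succ]
  exact tendsto_log_integral_mul_pow_div (by norm_num) hf hf0
    (ContinuousOn.inv₀ (by fun_prop) fun t ht => (hw ht).ne') (fun t ht => inv_pos.2 (hw ht))
    ht hmax hpos

end Asymptotics

section Nineteen

lemma le_mul_exp_div_sub_one {x x₀ : ℝ} (hx₀ : 0 < x₀) : x ≤ x₀ * exp (x / x₀ - 1) := by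
  have h := add_one_le_exp (x / x₀ - 1)
  rwa [sub_add_cancel, div_le_iff₀' hx₀] at h

-- The point `u₀ = 41 / 89` is close to the maximum of the left-hand side, so linearising the
-- logarithm of each factor there costs only a factor `exp (1 / 200)`.
lemma pow_mul_pow_div_pow_le {u : ℝ} (h₀ : 0 ≤ u) (h₁ : u ≤ 1) :
    u ^ 5 * (1 - u) ^ 6 / (19 - u) ^ 5
      ≤ (41 / 89) ^ 5 * (48 / 89) ^ 6 * (89 / 1650) ^ 5 * exp (1 / 200) := by
  have hv : 0 ≤ 1 - u := by linarith
  have hw : 0 < 19 - u := by linarith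
  set x := u / (41 / 89) - 1 with hx
  set y := (1 - u) / (48 / 89) - 1 with hy
  set z := (19 - u)⁻¹ / (89 / 1650) - 1 with hz
  have hsum : 5 * x + 6 * y + 5 * z ≤ 1 / 200 := by
    refine le_of_mul_le_mul_right ?_ hw
    have hzw : z * (19 - u) = 1650 / 89 - (19 - u) := by
      rw [hz]
      field_simp
    nlinarith [mul_nonneg h₀ hv]
  calc u ^ 5 * (1 - u) ^ 6 / (19 - u) ^ 5
      = u ^ 5 * (1 - u) ^ 6 * ((19 - u)⁻¹) ^ 5 := by rw [inv_pow, div_eq_mul_inv]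
    _ ≤ (41 / 89 * exp x) ^ 5 * (48 / 89 * exp y) ^ 6 * (89 / 1650 * exp z) ^ 5 := by
        gcongr <;> exact le_mul_exp_div_sub_one (by norm_num)
    _ = (41 / 89) ^ 5 * (48 / 89) ^ 6 * (89 / 1650) ^ 5 * exp (5 * x + 6 * y + 5 * z) := by
        rw [exp_add, exp_add, mul_comm 5 x, mul_comm 6 y, mul_comm 5 z]
        simp only [exp_mul, rpow_ofNat]
        ring
    _ ≤ _ := by gcongr

lemma sixteen_mul_pow_mul_pow_div_pow_le {u : ℝ} (h₀ : 0 ≤ u) (h₁ : u ≤ 1) :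
    16 * (u ^ 5 * (1 - u) ^ 6 / (19 - u) ^ 5) ≤ exp (-(97 / 5)) := by
  have hexp : exp (1 / 200) ≤ 200 / 199 :=
    (exp_bound_div_one_sub_of_interval (by norm_num) (by norm_num)).trans (by norm_num)
  have hnum : 16 * ((41 / 89) ^ 5 * (48 / 89) ^ 6 * (89 / 1650) ^ 5 * (200 / 199))
      * exp (97 / 5) ≤ 1 := by
    rw [← pow_le_one_iff_of_nonneg (by positivity) (n := 5) (by norm_num), mul_pow,
      ← exp_nat_mul, show ((5 : ℕ) : ℝ) * (97 / 5) = (97 : ℕ) * 1 by norm_num, exp_nat_mul]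
    grw [exp_one_lt_d9]
    norm_num
  rw [exp_neg, ← one_div, le_div_iff₀ (exp_pos _)]
  grw [pow_mul_pow_div_pow_le h₀ h₁, hexp]
  exact hnum

lemma sixteen_mul_pow_mul_pow_div_pow_le_exp :
    (16 * (34 ^ 5 * 33 ^ 6 / 15 ^ 5) : ℝ) ≤ exp (223 / 8) := by
  rw [← pow_le_pow_iff_left₀ (by norm_num) (exp_pos _).le (n := 8) (by norm_num), ← exp_nat_mul,
    show ((8 : ℕ) : ℝ) * (223 / 8) = (223 : ℕ) * 1 by norm_num, exp_nat_mul]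
  grw [← exp_one_gt_d9]
  norm_num

/-- The small linear forms in `1` and `√19 * log ((√19 - 1) / (√19 + 1))`: the integrals of
exponents `5 * n`, `6 * n`, cleared of denominators and divided by the cancelled primes. -/
noncomputable def linearForm (n : ℕ) : ℝ :=
  19 * (2 ^ (4 * n) * (Nat.lcmUpto (12 * n) / (∏ p ∈ cancelledPrimes n, p : ℕ)) *
    rationalIntegral 19 (5 * n) (6 * n) (5 * n + 1))

lemma lcmUpto_div_prod_cancelledPrimes (n : ℕ) :
    (Nat.lcmUpto (12 * n) / (∏ p ∈ cancelledPrimes n, p : ℕ) : ℝ)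
      = exp (Chebyshev.psi (12 * n) - log (∏ p ∈ cancelledPrimes n, p : ℕ)) := by
  have hψ : Chebyshev.psi (12 * n) = log (Nat.lcmUpto (12 * n)) := by
    exact_mod_cast Chebyshev.psi_eq_log_lcmUpto (12 * n)
  rw [hψ, exp_sub, exp_log (Nat.cast_pos.2 (Nat.lcmUpto_pos _)),
    exp_log (Nat.cast_pos.2 (prod_cancelledPrimes_pos n))]

lemma exists_tendsto_log_abs_linearForm_div :
    ∃ s, 643 / 70 ≤ s ∧ Tendsto (fun n : ℕ => log |linearForm n| / n) atTop (𝓝 (-s)) := by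
  obtain ⟨t, ht, hpos, hlim⟩ :=
    exists_tendsto_log_rationalIntegral_div (N := 19) (by norm_num) 5 6 5
  set M := t ^ (2 * 5) * (1 - t ^ 2) ^ 6 / (19 - t ^ 2) ^ 5 with hM
  refine ⟨-(log 16 + 143 / 14 + log M), ?_, ?_⟩
  · have hbound : log (16 * M) ≤ -(97 / 5) := by
      rw [log_le_iff_le_exp (by positivity), hM, pow_mul]
      exact sixteen_mul_pow_mul_pow_div_pow_le (sq_nonneg t)
        (sq_le_one_of_mem_uIcc (Icc_subset_uIcc ht))
    rw [log_mul (by norm_num) hpos.ne'] at hbound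
    linarith
  · have hconst : Tendsto (fun n : ℕ => log 19 / n) atTop (𝓝 0) :=
      tendsto_const_nhds.div_atTop tendsto_natCast_atTop_atTop
    have h := ((hconst.add_const (log 16)).add
      tendsto_psi_sub_log_prod_cancelledPrimes_div).add hlim
    rw [neg_neg, ← zero_add (log 16)]
    refine h.congr' ?_
    filter_upwards [eventually_gt_atTop 0] with n hn
    have hI := rationalIntegral_pos (N := 19) (by norm_num) (5 * n) (6 * n) (5 * n + 1)
    rw [linearForm, lcmUpto_div_prod_cancelledPrimes, abs_of_pos (by positivity),
      log_mul (by norm_num) (by positivity), log_mul (by positivity) hI.ne',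
      log_mul (by positivity) (exp_ne_zero _), log_exp, pow_mul, log_pow]
    field_simp
    norm_num
    ring

lemma eventually_exists_int_sub_mul_eq_linearForm :
    ∀ᶠ n : ℕ in atTop, ∃ P Q : ℤ,
      P - Q * (-19 * rationalIntegral 19 0 0 1) = linearForm n ∧
        |(Q : ℝ)| ≤ exp (381 / 10 * n) := by
  filter_upwards [eventually_ge_atTop 12, tendsto_psi_sub_log_prod_cancelledPrimes_div.eventually
    (eventually_le_nhds (b := 381 / 10 - 223 / 8) (by norm_num))] with n hn hrate
  obtain ⟨P, Q, hPQ, hQ⟩ := isIntegerForm_div_mul_rationalIntegral (k := 9) (ρ := 15) (by norm_num)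
    (a := 5 * n) (b := 6 * n) (by lia) (by lia) (prod_cancelledPrimes_dvd hn)
    (coprime_prod_cancelledPrimes hn) (by norm_num) (by norm_num)
  rw [show 2 * (5 * n) - 6 * n = 4 * n by lia, show 2 * (6 * n) = 12 * n by ring] at hPQ hQ
  norm_num only [Nat.cast_ofNat] at hPQ hQ
  refine ⟨19 * P, Q, ?_, hQ.trans ?_⟩
  · rw [linearForm, hPQ]
    push_cast
    ring
  · have hn' : (0 : ℝ) < n := by positivity
    rw [div_le_iff₀ hn'] at hrate
    calc _ = (16 * (34 ^ 5 * 33 ^ 6 / 15 ^ 5)) ^ n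
          * exp (Chebyshev.psi (12 * n) - log (∏ p ∈ cancelledPrimes n, p : ℕ)) := by
          rw [lcmUpto_div_prod_cancelledPrimes, pow_mul, pow_mul, pow_mul, pow_mul, mul_pow,
            div_pow, mul_pow]
          ring
      _ ≤ exp (223 / 8) ^ n * exp ((381 / 10 - 223 / 8) * n) := by
          gcongr
          exact sixteen_mul_pow_mul_pow_div_pow_le_exp
      _ = _ := by
          rw [← exp_nat_mul, ← exp_add]
          ring_nf

end Nineteen

theorem irrationality_measure_alpha_5_general :
    ∀ κ : ℝ, κ > 5.15 →
      {pq : ℤ × ℕ+ |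
        |Real.sqrt 19 * Real.log ((Real.sqrt 19 - 1) / (Real.sqrt 19 + 1)) -
            (pq.1 : ℝ) / ((pq.2 : ℕ) : ℝ)| <
          ((pq.2 : ℕ) : ℝ) ^ (-κ)}.Finite := by
  intro κ hκ
  obtain ⟨s, hs, hlim⟩ := exists_tendsto_log_abs_linearForm_div
  have hexponent : 1 + 381 / 10 / s < κ := by
    calc 1 + 381 / 10 / s ≤ 1 + 381 / 10 / (643 / 70) := by gcongr
      _ < 5.15 := by norm_num
      _ < κ := hκ
  rw [sqrt_mul_log_eq_neg_mul_rationalIntegral (by norm_num)]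
  exact finite_setOf_abs_sub_div_lt_rpow_neg (by linarith)
    (eventually_rpow_neg_le_abs_sub_div (by linarith) (by norm_num) hexponent hlim
      eventually_exists_int_sub_mul_eq_linearForm)

theorem irrationality_measure_alpha_5 :
    ∀ κ : ℝ, κ > 5.23163 →
      {pq : ℤ × ℕ+ |
        |Real.sqrt 19 * Real.log ((Real.sqrt 19 - 1) / (Real.sqrt 19 + 1)) -
            (pq.1 : ℝ) / ((pq.2 : ℕ) : ℝ)| <
          ((pq.2 : ℕ) : ℝ) ^ (-κ)}.Finite :=
  fun κ hκ => irrationality_measure_alpha_5_general κ (by linarith)
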